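/- Let Σ_A(ℕ) be a topologically mixing, finitely primitive (BIP) countable Markov shift, f : Σ_A(ℕ) → ℝ satisfying the Walters condition with Var_1 f < ∞ and P(f) < ∞, admitting a unique maximizing measure, and for β > 1 let μ_β be the Gibbs measure of βf. Suppose β_i → ∞ is a sequence such that for every cylinder C the limit lim_{β_i→∞} (1/β_i) log μ_{β_i}(C) exists. Then: (1) the function Ĩ(x) := −lim_{n→∞} lim_{β_i→∞} (1/β_i) log μ_{β_i}([x_0 … x_n]) is well defined, nonnegative and lower semi-continuous; (2) for every cylinder C, lim_{β_i→∞} (1/β_i) log μ_{β_i}(C) = −inf_{x∈C} Ĩ(x); (3) Ĩ(x) ≥ Ĩ(σ(x)) for all x, and in particular the limit Ĩ_0(x) := lim_{n→∞} Ĩ(σ^n(x)) exists. -/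

import Mathlib

open Filter Topology MeasureTheory
open scoped ENNReal

/-- The countable Markov shift over alphabet ℕ determined by the 0-1 matrix `A`. -/
def MarkovShift (A : ℕ → ℕ → Bool) : Type :=
  {x : ℕ → ℕ // ∀ i, A (x i) (x (i + 1)) = true}

namespace MarkovShift

variable {A : ℕ → ℕ → Bool}

instance : TopologicalSpace (MarkovShift A) :=
  instTopologicalSpaceSubtype

instance : MeasurableSpace (MarkovShift A) := borel _

instance : BorelSpace (MarkovShift A) := ⟨rfl⟩

/-- The shift map. -/
def shift (x : MarkovShift A) : MarkovShift A :=
  ⟨fun n => x.1 (n + 1), fun i => x.2 (i + 1)⟩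

/-- The cylinder set determined by a finite word. -/
def cylinder (w : List ℕ) : Set (MarkovShift A) :=
  {x | ∀ i : Fin w.length, x.1 i = w.get i}

/-- The cylinder set determined by the first `m` coordinates of `x`. -/
def cylOf (x : MarkovShift A) (m : ℕ) : Set (MarkovShift A) :=
  {y | ∀ i < m, y.1 i = x.1 i}

/-- A symbol is admissible when its cylinder is nonempty. -/
def Admissible (A : ℕ → ℕ → Bool) (a : ℕ) : Prop :=
  ∃ x : MarkovShift A, x.1 0 = a

/-- Topologically mixing. -/
def TopologicallyMixing (A : ℕ → ℕ → Bool) : Prop :=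
  ∀ a b : ℕ, Admissible A a → Admissible A b →
    ∃ N : ℕ, ∀ n ≥ N, ∃ x : MarkovShift A, x.1 0 = a ∧ (shift^[n] x).1 0 = b

/-- Finitely primitive (BIP). -/
def FinitelyPrimitive (A : ℕ → ℕ → Bool) : Prop :=
  ∃ (K₀ : ℕ) (F : Finset ℕ), ∀ a b : ℕ, Admissible A a → Admissible A b →
    ∃ w : List ℕ, w.length = K₀ ∧ (∀ c ∈ w, c ∈ F) ∧
      List.Chain' (fun u v => A u v = true) (a :: (w ++ [b]))

/-- First coordinate where two distinct points disagree. -/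
noncomputable def firstDiff (x y : MarkovShift A) (h : x ≠ y) : ℕ :=
  Nat.find (Function.ne_iff.mp (fun hxy : x.1 = y.1 => h (Subtype.ext hxy)))

open Classical in
/-- The metric `d(x,y) = r^{t(x,y)}`. -/
noncomputable def dist' (r : ℝ) (x y : MarkovShift A) : ℝ :=
  if h : x = y then 0 else r ^ firstDiff x y h

/-- Birkhoff sum `S_n f`. -/
def birkhoff (f : MarkovShift A → ℝ) (n : ℕ) (x : MarkovShift A) : ℝ :=
  ∑ j ∈ Finset.range n, f (shift^[j] x)

/-- The set of values `|S_n f x - S_n f y|` over pairs agreeing on the first `m` coordinates. -/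
def varSet (f : MarkovShift A → ℝ) (n m : ℕ) : Set ℝ :=
  {c | ∃ x y : MarkovShift A, (∀ i < m, x.1 i = y.1 i) ∧ c = |birkhoff f n x - birkhoff f n y|}

/-- `Var_m (S_n f)`. -/
noncomputable def varBirk (f : MarkovShift A → ℝ) (n m : ℕ) : ℝ := sSup (varSet f n m)

/-- `Var_1 f < ∞`. -/
def Var1Finite (f : MarkovShift A → ℝ) : Prop := BddAbove (varSet f 1 1)

/-- The set whose supremum is `sup_{n ≥ 1} Var_{n+k}(S_n f)`. -/
def waltersSet (f : MarkovShift A → ℝ) (k : ℕ) : Set ℝ :=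
  {c | ∃ n, 1 ≤ n ∧ c ∈ varSet f n (n + k)}

/-- `M_k = sup_{n ≥ 1} Var_{n+k}(S_n f)`. -/
noncomputable def waltersSup (f : MarkovShift A → ℝ) (k : ℕ) : ℝ := sSup (waltersSet f k)

/-- The Walters condition. -/
def SatisfiesWalters (f : MarkovShift A → ℝ) : Prop :=
  (∀ k, 1 ≤ k → BddAbove (waltersSet f k)) ∧
    Tendsto (fun k => waltersSup f k) atTop (𝓝 0)

/-- The partition function `Z_n(f,a) = Σ_{σ^n x = x, x₀ = a} e^{S_n f (x)}`. -/
noncomputable def partitionSum (f : MarkovShift A → ℝ) (n : ℕ) (a : ℕ) : ℝ :=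
  ∑' x : {x : MarkovShift A // shift^[n] x = x ∧ x.1 0 = a}, Real.exp (birkhoff f n x.1)

/-- `f` has (finite) Gurevich pressure `p`. -/
def HasGurevichPressure (f : MarkovShift A → ℝ) (p : ℝ) : Prop :=
  ∀ a : ℕ, Admissible A a →
    (∀ n, 1 ≤ n → Summable fun x : {x : MarkovShift A // shift^[n] x = x ∧ x.1 0 = a} =>
        Real.exp (birkhoff f n x.1)) ∧
    Tendsto (fun n : ℕ => (1 / (n : ℝ)) * Real.log (partitionSum f n a)) atTop (𝓝 p)

/-- σ-invariant Borel probability measure. -/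
def IsInvariantProb (μ : Measure (MarkovShift A)) : Prop :=
  IsProbabilityMeasure μ ∧ μ.map shift = μ

/-- `m(f)`, the maximal ergodic average. -/
noncomputable def mf (f : MarkovShift A → ℝ) : ℝ :=
  sSup {c | ∃ μ : Measure (MarkovShift A),
    IsInvariantProb μ ∧ Integrable f μ ∧ ∫ x, f x ∂μ = c}

/-- A maximizing measure for `f`. -/
def IsMaximizing (f : MarkovShift A → ℝ) (μ : Measure (MarkovShift A)) : Prop :=
  IsInvariantProb μ ∧ Integrable f μ ∧ ∫ x, f x ∂μ = mf f

/-- Bounded real valued function. -/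
def BoundedFun (g : MarkovShift A → ℝ) : Prop := ∃ C, ∀ x, |g x| ≤ C

/-- A bounded calibrated sub-action for `f`. -/
def IsCalibratedSubaction (f V : MarkovShift A → ℝ) : Prop :=
  Continuous V ∧ BoundedFun V ∧
    (∀ x, f x + V x - V (shift x) - mf f ≤ 0) ∧
    (∀ y, ∃ x, shift x = y ∧ f x + V x - V (shift x) - mf f = 0)

/-- The Ruelle transfer operator `(L_g u)(x) = Σ_{σ y = x} e^{g(y)} u(y)`. -/
noncomputable def ruelle (g u : MarkovShift A → ℝ) (x : MarkovShift A) : ℝ :=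
  ∑' y : {y : MarkovShift A // shift y = x}, Real.exp (g y.1) * u y.1

/-- Ruelle-Perron-Frobenius data for the potential `f` with pressure `p`:
eigenfunction `h`, eigenmeasure `ν`. -/
def IsRPF (f : MarkovShift A → ℝ) (p : ℝ) (h : MarkovShift A → ℝ)
    (ν : Measure (MarkovShift A)) : Prop :=
  Continuous h ∧ (∀ x, 0 < h x) ∧
    (∀ x, ruelle f h x = Real.exp p * h x) ∧
    IsProbabilityMeasure ν ∧
    (∀ g : MarkovShift A → ℝ, Continuous g → BoundedFun g →
      ∫ x, ruelle f g x ∂ν = Real.exp p * ∫ x, g x ∂ν) ∧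
    ∫ x, h x ∂ν = 1

/-- The Gibbs measure `dμ = h dν`. -/
noncomputable def gibbs (h : MarkovShift A → ℝ) (ν : Measure (MarkovShift A)) :
    Measure (MarkovShift A) :=
  ν.withDensity fun x => ENNReal.ofReal (h x)

/-- The Mañé potential `S_f(x,y)` (with respect to the metric of parameter `r`). -/
noncomputable def manePot (r : ℝ) (f : MarkovShift A → ℝ) (x y : MarkovShift A) : EReal :=
  ⨅ ε : {ε : ℝ // 0 < ε}, ⨆ n : {n : ℕ // 1 ≤ n},
    ⨆ _z : {z : MarkovShift A // dist' r x z < ε.1 ∧ shift^[n.1] z = y},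
      ((birkhoff (fun w => f w - mf f) n.1 _z.1 : ℝ) : EReal)

/-- The (topological) support of a measure. -/
def msupport (μ : Measure (MarkovShift A)) : Set (MarkovShift A) :=
  {x | ∀ U : Set (MarkovShift A), IsOpen U → x ∈ U → 0 < μ U}

end MarkovShift

namespace MarkovShift

variable {A : ℕ → ℕ → Bool}

instance : TopologicalSpace.MetrizableSpace (MarkovShift A) :=
  haveI : TopologicalSpace.MetrizableSpace (ℕ → ℕ) :=
    TopologicalSpace.metrizableSpace_of_t3_secondCountable _
  (Topology.IsEmbedding.subtypeVal (p := fun x : ℕ → ℕ => ∀ i, A (x i) (x (i + 1)) = true)).metrizableSpace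

theorem continuous_coord (n : ℕ) : Continuous (fun x : MarkovShift A => x.1 n) :=
  (continuous_apply n).comp continuous_subtype_val

theorem continuous_mk' {X : Type*} [TopologicalSpace X] (g : X → MarkovShift A)
    (hg : ∀ n, Continuous fun x => (g x).1 n) : Continuous g :=
  continuous_induced_rng.2 (continuous_pi hg)

theorem continuous_shift : Continuous (shift : MarkovShift A → MarkovShift A) :=
  continuous_mk' _ fun n => continuous_coord (n + 1)

theorem shift_iter_coord (n : ℕ) (x : MarkovShift A) (i : ℕ) :
    (shift^[n] x).1 i = x.1 (n + i) := by
  induction n generalizing x with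
  | zero => simp
  | succ n ih =>
    rw [Function.iterate_succ_apply, ih]
    show x.1 (n + i + 1) = _
    rw [show n + i + 1 = n + 1 + i by omega]

theorem isClopen_coord (n : ℕ) (S : Set ℕ) : IsClopen {x : MarkovShift A | x.1 n ∈ S} :=
  (isClopen_discrete S).preimage (continuous_coord n)

theorem isClopen_cylOf (x : MarkovShift A) (m : ℕ) : IsClopen (cylOf x m) := by
  have : cylOf x m = ⋂ i ∈ Finset.range m, {y : MarkovShift A | y.1 i ∈ ({x.1 i} : Set ℕ)} := by
    ext y; simp [cylOf]
  rw [this]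
  exact isClopen_biInter_finset fun i _ => isClopen_coord i _

theorem mem_cylOf_self (x : MarkovShift A) (m : ℕ) : x ∈ cylOf x m := fun _ _ => rfl

theorem isClopen_cylinder (w : List ℕ) : IsClopen (cylinder (A := A) w) := by
  have : cylinder (A := A) w = ⋂ i : Fin w.length,
      {y : MarkovShift A | y.1 i ∈ ({w.get i} : Set ℕ)} := by
    ext y; simp [cylinder]
  rw [this]
  exact isClopen_iInter_of_finite fun i => isClopen_coord i _

theorem exists_walters {f : MarkovShift A → ℝ} (hW : SatisfiesWalters f) {ε : ℝ} (hε : 0 < ε) :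
    ∃ k, ∀ x y : MarkovShift A, (∀ i < k, x.1 i = y.1 i) → |f x - f y| < ε := by
  obtain ⟨hb, ht⟩ := hW
  obtain ⟨k, hk, hk1⟩ := ((ht.eventually (gt_mem_nhds hε)).and (eventually_ge_atTop 1)).exists
  refine ⟨1 + k, fun x y hxy => lt_of_le_of_lt ?_ hk⟩
  refine le_csSup (hb k hk1) ⟨1, le_rfl, x, y, hxy, ?_⟩
  simp [birkhoff]

theorem continuous_of_walters {f : MarkovShift A → ℝ} (hW : SatisfiesWalters f) :
    Continuous f := by
  rw [continuous_iff_continuousAt]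
  intro x
  rw [ContinuousAt, Metric.tendsto_nhds]
  intro ε hε
  obtain ⟨k, hk⟩ := exists_walters hW hε
  filter_upwards [(isClopen_cylOf x k).isOpen.mem_nhds (mem_cylOf_self x k)] with y hy
  exact hk y x hy

theorem birkhoff_succ' (f : MarkovShift A → ℝ) (n : ℕ) (x : MarkovShift A) :
    birkhoff f (n + 1) x = f x + birkhoff f n (shift x) := by
  simp only [birkhoff, Finset.sum_range_succ', Function.iterate_succ_apply]
  simp [add_comm]

theorem exists_var1 {f : MarkovShift A → ℝ} (hV : Var1Finite f) :
    ∃ V, 0 ≤ V ∧ ∀ x y : MarkovShift A, x.1 0 = y.1 0 → |f x - f y| ≤ V := by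
  obtain ⟨V, hV⟩ := hV
  refine ⟨max V 0, le_max_right _ _, fun x y hxy => le_trans (hV ⟨x, y, ?_, ?_⟩) (le_max_left _ _)⟩
  · intro i hi
    obtain rfl : i = 0 := by omega
    exact hxy
  · simp [birkhoff]

theorem exists_distortion {f : MarkovShift A → ℝ} (hW : SatisfiesWalters f) (hV : Var1Finite f) :
    ∃ D, 0 ≤ D ∧ ∀ n, ∀ x y : MarkovShift A, (∀ i < n, x.1 i = y.1 i) →
      |birkhoff f n x - birkhoff f n y| ≤ D := by
  obtain ⟨V, hV0, hV⟩ := exists_var1 hV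
  obtain ⟨W, hW⟩ := hW.1 1 le_rfl
  refine ⟨max W 0 + V, by positivity, fun n x y hxy => ?_⟩
  rcases n with _ | n
  · simp [birkhoff]; positivity
  · have h1 : |birkhoff f n x - birkhoff f n y| ≤ max W 0 := by
      rcases Nat.eq_zero_or_pos n with rfl | hn
      · simp [birkhoff]
      · exact (hW ⟨n, hn, x, y, hxy, rfl⟩).trans (le_max_left _ _)
    have h2 : |f (shift^[n] x) - f (shift^[n] y)| ≤ V := by
      apply hV
      rw [shift_iter_coord, shift_iter_coord]
      exact hxy _ (by omega)
    have e : ∀ z, birkhoff f (n+1) z = birkhoff f n z + f (shift^[n] z) := fun z => by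
      simp [birkhoff, Finset.sum_range_succ]
    rw [e, e]
    calc _ = |(birkhoff f n x - birkhoff f n y) + (f (shift^[n] x) - f (shift^[n] y))| := by
          congr 1; ring
      _ ≤ _ := (abs_add_le _ _).trans (add_le_add h1 h2)

/-- Prepend a symbol when allowed. -/
noncomputable def consS (a : ℕ) (x : MarkovShift A) : MarkovShift A :=
  if hA : A a (x.1 0) = true then
    ⟨fun n => Nat.casesOn n a x.1, fun i => by
      cases i with
      | zero => exact hA
      | succ i => exact x.2 i⟩
  else x

theorem consS_zero {a : ℕ} {x : MarkovShift A} (hA : A a (x.1 0) = true) :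
    (consS a x).1 0 = a := by simp [consS, hA]

theorem shift_consS {a : ℕ} {x : MarkovShift A} (hA : A a (x.1 0) = true) :
    shift (consS a x) = x := by
  apply Subtype.ext; simp [consS, hA, shift]

theorem ext_shift {x y : MarkovShift A} (h0 : x.1 0 = y.1 0) (hs : shift x = shift y) : x = y := by
  apply Subtype.ext
  funext n
  cases n with
  | zero => exact h0
  | succ n => exact congrFun (congrArg Subtype.val hs) n

theorem consS_shift (x : MarkovShift A) : consS (x.1 0) (shift x) = x := by
  have hA : A (x.1 0) ((shift x).1 0) = true := x.2 0
  exact ext_shift (consS_zero hA) (shift_consS hA)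

theorem continuous_consS (a : ℕ) : Continuous (consS a : MarkovShift A → MarkovShift A) := by
  refine continuous_mk' _ fun n => ?_
  have : (fun x : MarkovShift A => (consS a x).1 n) =
      (fun p : ℕ × ℕ × ℕ => if A a p.1 = true then (if n = 0 then a else p.2.1) else p.2.2) ∘
        fun x : MarkovShift A => (x.1 0, x.1 (n - 1), x.1 n) := by
    funext x
    by_cases hA : A a (x.1 0) = true
    · cases n <;> simp [consS, hA]
    · simp [consS, hA]
  rw [this]
  exact continuous_of_discreteTopology.comp
    ((continuous_coord 0).prodMk ((continuous_coord _).prodMk (continuous_coord _)))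

/-- The points whose first symbol is `a`. -/
def sym (A : ℕ → ℕ → Bool) (a : ℕ) : Set (MarkovShift A) := {x | x.1 0 = a}

/-- The points which may follow `a`. -/
def fol (A : ℕ → ℕ → Bool) (a : ℕ) : Set (MarkovShift A) := {x | A a (x.1 0) = true}

theorem isClopen_sym (a : ℕ) : IsClopen (sym A a) := isClopen_coord 0 {a}
theorem isClopen_fol (a : ℕ) : IsClopen (fol A a) := isClopen_coord 0 {b | A a b = true}

/-- A sum over preimages where only the preimage with first symbol `a` counts. -/
theorem ruelle_branch (g u : MarkovShift A → ℝ) (a : ℕ) (x : MarkovShift A) :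
    ruelle g ((sym A a).indicator u) x =
      (fol A a).indicator (fun x => Real.exp (g (consS a x)) * u (consS a x)) x := by
  classical
  unfold ruelle
  by_cases hA : A a (x.1 0) = true
  · rw [Set.indicator_of_mem (show x ∈ fol A a from hA),
      tsum_eq_single (⟨consS a x, shift_consS hA⟩ : {y : MarkovShift A // shift y = x})]
    · rw [Set.indicator_of_mem (show consS a x ∈ sym A a from consS_zero hA)]
    · rintro ⟨y, hy⟩ hne
      rw [Set.indicator_of_notMem, mul_zero]
      intro (hya : y.1 0 = a)
      apply hne
      apply Subtype.ext
      exact ext_shift (hya.trans (consS_zero hA).symm) (hy.trans (shift_consS hA).symm)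
  · rw [Set.indicator_of_notMem (show x ∉ fol A a from hA)]
    convert tsum_zero with y
    rw [Set.indicator_of_notMem, mul_zero]
    intro (hya : y.1.1 0 = a)
    apply hA
    have := y.1.2 0
    rw [hya] at this
    have h2 : y.1.1 (0+1) = x.1 0 :=
      congrFun (congrArg Subtype.val y.2) 0
    rwa [h2] at this

theorem measurable_shift : Measurable (shift : MarkovShift A → MarkovShift A) :=
  continuous_shift.measurable

theorem exists_sym_bound {g : MarkovShift A → ℝ} {V : ℝ}
    (hV : ∀ x y : MarkovShift A, x.1 0 = y.1 0 → |g x - g y| ≤ V) (a : ℕ) :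
    ∃ C, ∀ z ∈ sym A a, |g z| ≤ C := by
  by_cases hne : (sym A a).Nonempty
  · obtain ⟨y, hy⟩ := hne
    refine ⟨V + |g y|, fun z hz => ?_⟩
    have h1 := hV z y (Eq.trans hz (Eq.symm hy))
    have := abs_sub_abs_le_abs_sub (g z) (g y)
    linarith
  · exact ⟨0, fun z hz => (hne ⟨z, hz⟩).elim⟩

theorem conf_one {g : MarkovShift A → ℝ} (hg : Continuous g) {V : ℝ}
    (hV : ∀ x y : MarkovShift A, x.1 0 = y.1 0 → |g x - g y| ≤ V) {p : ℝ}
    {h : MarkovShift A → ℝ} {ν : Measure (MarkovShift A)} (hR : IsRPF g p h ν) (a : ℕ) :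
    ((ν.restrict (sym A a)).withDensity (fun z => ENNReal.ofReal (Real.exp (p - g z)))).map shift
      = ν.restrict (fol A a) := by
  obtain ⟨-, -, -, hprob, hdual, -⟩ := hR
  obtain ⟨C, hC⟩ := exists_sym_bound hV a
  have hsm : MeasurableSet (sym A a) := (isClopen_sym a).isOpen.measurableSet
  have hfm : MeasurableSet (fol A a) := (isClopen_fol a).isOpen.measurableSet
  have hdm : Measurable (fun z : MarkovShift A => ENNReal.ofReal (Real.exp (p - g z))) := by
    have : Continuous fun z : MarkovShift A => Real.exp (p - g z) := by fun_prop
    exact this.measurable.ennreal_ofReal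
  have : IsFiniteMeasure ((ν.restrict (sym A a)).withDensity
      (fun z => ENNReal.ofReal (Real.exp (p - g z)))) := by
    apply isFiniteMeasure_withDensity
    have : ∫⁻ z in sym A a, ENNReal.ofReal (Real.exp (p - g z)) ∂ν
        ≤ ∫⁻ z in sym A a, ENNReal.ofReal (Real.exp (p + C)) ∂ν := by
      apply setLIntegral_mono measurable_const
      intro z hz
      apply ENNReal.ofReal_le_ofReal
      apply Real.exp_le_exp.2
      have := (abs_le.1 (hC z hz)).1
      linarith
    refine ne_top_of_le_ne_top ?_ this
    rw [setLIntegral_const]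
    exact ENNReal.mul_ne_top ENNReal.ofReal_ne_top (measure_ne_top _ _)
  apply ext_of_forall_integral_eq_of_IsFiniteMeasure
  intro φ
  rw [integral_map measurable_shift.aemeasurable φ.continuous.aestronglyMeasurable,
    integral_withDensity_eq_integral_toReal_smul hdm (by simp)]
  set u : MarkovShift A → ℝ := (sym A a).indicator (fun z => Real.exp (- g z) * φ (shift z)) with hu
  have huc : Continuous u := by
    apply Continuous.indicator
    · intro x hx
      rw [(isClopen_sym a).frontier_eq] at hx
      exact hx.elim
    · have := continuous_shift (A := A)
      fun_prop
  have hub : BoundedFun u := by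
    refine ⟨Real.exp C * ‖φ‖, fun x => ?_⟩
    by_cases hx : x ∈ sym A a
    · rw [hu, Set.indicator_of_mem hx, abs_mul, Real.abs_exp]
      gcongr
      · have := (abs_le.1 (hC x hx)).1
        linarith
      · exact φ.norm_coe_le_norm _
    · rw [hu, Set.indicator_of_notMem hx, abs_zero]
      positivity
  have key := hdual u huc hub
  have e1 : ∀ x, ruelle g u x = (fol A a).indicator (fun x => φ x) x := by
    intro x
    rw [hu, ruelle_branch]
    by_cases hx : x ∈ fol A a
    · rw [Set.indicator_of_mem hx, Set.indicator_of_mem hx, shift_consS hx, ← mul_assoc,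
        ← Real.exp_add]
      simp
    · rw [Set.indicator_of_notMem hx, Set.indicator_of_notMem hx]
  simp_rw [e1] at key
  rw [integral_indicator hfm] at key
  rw [key, hu, integral_indicator hsm, ← integral_const_mul]
  apply integral_congr_ae
  filter_upwards with z
  rw [ENNReal.toReal_ofReal (Real.exp_pos _).le, smul_eq_mul, ← mul_assoc, ← Real.exp_add]
  ring_nf

theorem conf_one_lintegral {g : MarkovShift A → ℝ} (hg : Continuous g) {V : ℝ}
    (hV : ∀ x y : MarkovShift A, x.1 0 = y.1 0 → |g x - g y| ≤ V) {p : ℝ}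
    {h : MarkovShift A → ℝ} {ν : Measure (MarkovShift A)} (hR : IsRPF g p h ν) (a : ℕ)
    {G : MarkovShift A → ℝ≥0∞} (hG : Measurable G) :
    ∫⁻ z in sym A a, ENNReal.ofReal (Real.exp (p - g z)) * G (shift z) ∂ν
      = ∫⁻ x in fol A a, G x ∂ν := by
  have hdm : Measurable (fun z : MarkovShift A => ENNReal.ofReal (Real.exp (p - g z))) := by
    have : Continuous fun z : MarkovShift A => Real.exp (p - g z) := by fun_prop
    exact this.measurable.ennreal_ofReal
  rw [← conf_one hg hV hR a, lintegral_map hG measurable_shift,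
    lintegral_withDensity_eq_lintegral_mul _ hdm (g := fun z => G (shift z)) (hG.comp measurable_shift)]
  rfl

theorem continuous_birkhoff {g : MarkovShift A → ℝ} (hg : Continuous g) (n : ℕ) :
    Continuous (birkhoff g n) := by
  unfold birkhoff
  exact continuous_finsetSum _ fun j _ => hg.comp (continuous_shift.iterate j)

theorem measurable_wt {g : MarkovShift A → ℝ} (hg : Continuous g) (p : ℝ) (n : ℕ) :
    Measurable (fun z : MarkovShift A => ENNReal.ofReal (Real.exp (n * p - birkhoff g n z))) := by
  have := continuous_birkhoff hg n
  have : Continuous fun z : MarkovShift A => Real.exp (n * p - birkhoff g n z) := by fun_prop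
  exact this.measurable.ennreal_ofReal

theorem conf_n {g : MarkovShift A → ℝ} (hg : Continuous g) {V : ℝ}
    (hV : ∀ x y : MarkovShift A, x.1 0 = y.1 0 → |g x - g y| ≤ V) {p : ℝ}
    {h : MarkovShift A → ℝ} {ν : Measure (MarkovShift A)} (hR : IsRPF g p h ν)
    {G : MarkovShift A → ℝ≥0∞} (hG : Measurable G) (n : ℕ) (y : MarkovShift A) :
    ∫⁻ z in cylOf y (n + 1), ENNReal.ofReal (Real.exp (((n + 1 : ℕ) : ℝ) * p - birkhoff g (n + 1) z))
        * G (shift^[n + 1] z) ∂ν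
      = ∫⁻ x in fol A (y.1 n), G x ∂ν := by
  induction n generalizing y with
  | zero =>
    rw [← conf_one_lintegral hg hV hR _ hG]
    have : cylOf y (0 + 1) = sym A (y.1 0) := by
      ext z; simp [cylOf, sym]
    rw [this]
    simp [birkhoff]
  | succ n ih =>
    have h1 := ih (shift y)
    have e : (shift y).1 n = y.1 (n + 1) := rfl
    rw [e] at h1
    rw [← h1]
    have hcm := (isClopen_cylOf (shift y) (n + 1)).isOpen.measurableSet
    have hm : Measurable ((cylOf (shift y) (n+1)).indicator fun z =>
        ENNReal.ofReal (Real.exp (((n + 1 : ℕ) : ℝ) * p - birkhoff g (n + 1) z))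
        * G (shift^[n + 1] z)) :=
      ((measurable_wt hg p (n+1)).mul (hG.comp (measurable_shift.iterate (n+1)))).indicator hcm
    have h2 := conf_one_lintegral hg hV hR (y.1 0) hm
    have hsub : cylOf (shift y) (n + 1) ⊆ fol A (y.1 0) := by
      intro z hz
      have := hz 0 (by omega)
      show A (y.1 0) (z.1 0) = true
      rw [this]
      exact y.2 0
    rw [setLIntegral_indicator hcm, Set.inter_eq_left.2 hsub] at h2
    rw [← h2, ← lintegral_indicator (isClopen_sym _).isOpen.measurableSet,
      ← lintegral_indicator (isClopen_cylOf _ _).isOpen.measurableSet]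
    congr 1
    funext z
    by_cases hz0 : z ∈ sym A (y.1 0)
    · rw [Set.indicator_of_mem hz0]
      have hiff : z ∈ cylOf y (n + 1 + 1) ↔ shift z ∈ cylOf (shift y) (n + 1) := by
        constructor
        · intro hz i hi
          exact hz (i + 1) (by omega)
        · intro hz i hi
          cases i with
          | zero => exact hz0
          | succ i => exact hz i (by omega)
      by_cases hz : z ∈ cylOf y (n + 1 + 1)
      · rw [Set.indicator_of_mem hz, Set.indicator_of_mem (hiff.1 hz), ← mul_assoc,
          ← ENNReal.ofReal_mul (Real.exp_pos _).le, ← Real.exp_add, birkhoff_succ' g (n+1),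
          Function.iterate_succ_apply]
        congr 3
        push_cast
        ring_nf
      · rw [Set.indicator_of_notMem hz, Set.indicator_of_notMem (fun hh => hz (hiff.2 hh)), mul_zero]
    · rw [Set.indicator_of_notMem hz0, Set.indicator_of_notMem]
      intro hz
      exact hz0 (hz 0 (by omega))

theorem sym_upper {g : MarkovShift A → ℝ} (hg : Continuous g) {V : ℝ}
    (hV : ∀ x y : MarkovShift A, x.1 0 = y.1 0 → |g x - g y| ≤ V) {p : ℝ}
    {h : MarkovShift A → ℝ} {ν : Measure (MarkovShift A)} (hR : IsRPF g p h ν) (a : ℕ)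
    {s : ℝ} (hs : ∀ z ∈ sym A a, g z ≤ s) :
    ν (sym A a) ≤ ENNReal.ofReal (Real.exp (s - p)) := by
  have hprob := hR.2.2.2.1
  have h1 := conf_one_lintegral hg hV hR a (G := fun _ => 1) measurable_const
  simp only [mul_one, setLIntegral_one] at h1
  have h2 : ENNReal.ofReal (Real.exp (p - s)) * ν (sym A a) ≤ 1 := by
    calc _ = ∫⁻ z in sym A a, ENNReal.ofReal (Real.exp (p - s)) ∂ν := by rw [setLIntegral_const]
      _ ≤ ∫⁻ z in sym A a, ENNReal.ofReal (Real.exp (p - g z)) ∂ν := by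
        apply setLIntegral_mono' (isClopen_sym a).isOpen.measurableSet
        intro z hz
        have := hs z hz
        gcongr
      _ ≤ 1 := h1 ▸ prob_le_one
  calc ν (sym A a) = ENNReal.ofReal (Real.exp (s - p)) * (ENNReal.ofReal (Real.exp (p - s)) * ν (sym A a)) := by
        rw [← mul_assoc, ← ENNReal.ofReal_mul (Real.exp_pos _).le, ← Real.exp_add]; simp
    _ ≤ ENNReal.ofReal (Real.exp (s - p)) * 1 := by gcongr
    _ = _ := mul_one _

theorem fol_upper {g : MarkovShift A → ℝ} (hg : Continuous g) {V : ℝ}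
    (hV : ∀ x y : MarkovShift A, x.1 0 = y.1 0 → |g x - g y| ≤ V) {p : ℝ}
    {h : MarkovShift A → ℝ} {ν : Measure (MarkovShift A)} (hR : IsRPF g p h ν) (a : ℕ)
    {C : ℝ} (hs : ∀ z ∈ sym A a, -C ≤ g z) :
    ν (fol A a) ≤ ENNReal.ofReal (Real.exp (p + C)) * ν (sym A a) := by
  have h1 := conf_one_lintegral hg hV hR a (G := fun _ => 1) measurable_const
  simp only [mul_one, setLIntegral_one] at h1
  rw [← h1, ← setLIntegral_const]
  apply setLIntegral_mono' (isClopen_sym a).isOpen.measurableSet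
  intro z hz
  have := hs z hz
  apply ENNReal.ofReal_le_ofReal
  apply Real.exp_le_exp.2
  linarith

/-- One step of the reachability relation through symbols of `F`. -/
def stepS (A : ℕ → ℕ → Bool) (F : Finset ℕ) (S : Set ℕ) : Set ℕ :=
  {b | ∃ c ∈ F, c ∈ S ∧ A c b = true}

theorem stepS_mono (F : Finset ℕ) : Monotone (stepS A F) := by
  rintro S T hST b ⟨c, hc, hcS, hb⟩
  exact ⟨c, hc, hST hcS, hb⟩

theorem reach_of_chain (F : Finset ℕ) (b : ℕ) (w : List ℕ) (hw : ∀ c ∈ w, c ∈ F) (a : ℕ)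
    (hc : List.IsChain (fun u v => A u v = true) (a :: (w ++ [b]))) :
    b ∈ (stepS A F)^[w.length] {b | A a b = true} := by
  induction w generalizing a with
  | nil => simpa using hc
  | cons c w ih =>
    rw [List.cons_append, List.isChain_cons_cons] at hc
    have h1 := ih (fun d hd => hw d (List.mem_cons_of_mem _ hd)) c hc.2
    rw [List.length_cons, Function.iterate_succ_apply]
    refine (stepS_mono F).iterate _ ?_ h1
    intro d hd
    exact ⟨c, hw c List.mem_cons_self, hc.1, hd⟩

theorem fol_lower {g : MarkovShift A → ℝ} (hg : Continuous g) {V : ℝ}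
    (hV : ∀ x y : MarkovShift A, x.1 0 = y.1 0 → |g x - g y| ≤ V) {p : ℝ}
    {h : MarkovShift A → ℝ} {ν : Measure (MarkovShift A)} (hR : IsRPF g p h ν)
    {K : ℕ} {F : Finset ℕ} (hF : ∀ a b : ℕ, Admissible A a → Admissible A b →
      ∃ w : List ℕ, w.length = K ∧ (∀ c ∈ w, c ∈ F) ∧
        List.IsChain (fun u v => A u v = true) (a :: (w ++ [b])))
    {C : ℝ} (hC : ∀ z : MarkovShift A, z.1 0 ∈ F → -C ≤ g z) {a : ℕ} (ha : Admissible A a) :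
    1 ≤ ENNReal.ofReal (Real.exp (K * (p + C))) * ν (fol A a) := by
  classical
  have hprob := hR.2.2.2.1
  have step : ∀ S : Set ℕ, ν {x | x.1 0 ∈ stepS A F S} ≤
      ENNReal.ofReal (Real.exp (p + C)) * ν {x | x.1 0 ∈ S} := by
    intro S
    have hsub : {x : MarkovShift A | x.1 0 ∈ stepS A F S} ⊆ ⋃ c ∈ F.filter (· ∈ S), fol A c := by
      rintro x ⟨c, hc, hcS, hA⟩
      simp only [Set.mem_iUnion, Finset.mem_filter]
      exact ⟨c, ⟨hc, hcS⟩, hA⟩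
    calc _ ≤ _ := measure_mono hsub
      _ ≤ ∑ c ∈ F.filter (· ∈ S), ν (fol A c) := measure_biUnion_finset_le _ _
      _ ≤ ∑ c ∈ F.filter (· ∈ S), ENNReal.ofReal (Real.exp (p + C)) * ν (sym A c) := by
        apply Finset.sum_le_sum
        intro c hc
        apply fol_upper hg hV hR
        intro z hz
        apply hC
        rw [show z.1 0 = c from hz]
        exact (Finset.mem_filter.1 hc).1
      _ = ENNReal.ofReal (Real.exp (p + C)) * ν (⋃ c ∈ F.filter (· ∈ S), sym A c) := by
        rw [← Finset.mul_sum, measure_biUnion_finset]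
        · intro c _ d _ hcd
          apply Set.disjoint_left.2
          intro x (hx : _ = _) (hx' : _ = _)
          exact hcd (hx.symm.trans hx')
        · intro c _
          exact (isClopen_sym c).isOpen.measurableSet
      _ ≤ _ := by
        gcongr
        intro x hx
        simp only [Set.mem_iUnion, Finset.mem_filter] at hx
        obtain ⟨c, hc, hx⟩ := hx
        rw [Set.mem_ofPred_eq, show x.1 0 = c from hx]
        exact hc.2
  have it : ∀ n : ℕ, ν {x | x.1 0 ∈ (stepS A F)^[n] {b | A a b = true}} ≤
      ENNReal.ofReal (Real.exp (n * (p + C))) * ν (fol A a) := by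
    intro n
    induction n with
    | zero => simp [fol]
    | succ n ih =>
      rw [Function.iterate_succ_apply']
      refine (step _).trans ?_
      refine (mul_le_mul_right ih _).trans ?_
      rw [← mul_assoc, ← ENNReal.ofReal_mul (Real.exp_pos _).le, ← Real.exp_add]
      push_cast
      ring_nf
      rfl
  refine le_trans ?_ (it K)
  rw [← measure_univ (μ := ν)]
  apply measure_mono
  intro x _
  obtain ⟨w, hw, hwF, hch⟩ := hF a (x.1 0) ha ⟨x, rfl⟩
  have := reach_of_chain F _ w hwF a hch
  rw [hw] at this
  exact this

theorem exp_mul_cancel (t : ℝ) (x : ℝ≥0∞) :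
    ENNReal.ofReal (Real.exp (-t)) * (ENNReal.ofReal (Real.exp t) * x) = x := by
  rw [← mul_assoc, ← ENNReal.ofReal_mul (Real.exp_pos _).le, ← Real.exp_add]; simp

theorem quasi_bernoulli {g : MarkovShift A → ℝ} (hg : Continuous g) {V : ℝ}
    (hV : ∀ x y : MarkovShift A, x.1 0 = y.1 0 → |g x - g y| ≤ V) {p : ℝ}
    {h : MarkovShift A → ℝ} {ν : Measure (MarkovShift A)} (hR : IsRPF g p h ν)
    {D : ℝ} (hD : ∀ n, ∀ x y : MarkovShift A, (∀ i < n, x.1 i = y.1 i) →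
      |birkhoff g n x - birkhoff g n y| ≤ D)
    {c : ℝ} (hc : ∀ a, Admissible A a → 1 ≤ ENNReal.ofReal (Real.exp c) * ν (fol A a))
    (n : ℕ) (y : MarkovShift A) {B : Set (MarkovShift A)} (hB : MeasurableSet B) :
    0 < ν (cylOf y (n + 1)) ∧
    ν (cylOf y (n + 1) ∩ shift^[n + 1] ⁻¹' B) ≤
      ENNReal.ofReal (Real.exp (2 * D + c)) * ν (cylOf y (n + 1)) * ν B := by
  set q := ((n + 1 : ℕ) : ℝ) * p - birkhoff g (n + 1) y with hq
  have hcm := (isClopen_cylOf y (n + 1)).isOpen.measurableSet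
  have hBm : MeasurableSet (shift^[n + 1] ⁻¹' B) := (measurable_shift.iterate (n+1)) hB
  have adm : Admissible A (y.1 n) := ⟨shift^[n] y, by rw [shift_iter_coord]; rfl⟩
  have h1 : ν (fol A (y.1 n)) ≤ ENNReal.ofReal (Real.exp (q + D)) * ν (cylOf y (n + 1)) := by
    have := conf_n hg hV hR (G := fun _ => 1) measurable_const n y
    simp only [mul_one, setLIntegral_one] at this
    rw [← this, ← setLIntegral_const]
    apply setLIntegral_mono' hcm
    intro z hz
    apply ENNReal.ofReal_le_ofReal
    apply Real.exp_le_exp.2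
    have := (abs_le.1 (hD (n + 1) z y hz)).1
    linarith
  have h2 : ENNReal.ofReal (Real.exp (q - D)) * ν (cylOf y (n + 1) ∩ shift^[n + 1] ⁻¹' B) ≤ ν B := by
    have := conf_n hg hV hR (G := B.indicator 1) (measurable_one.indicator hB) n y
    calc _ = ∫⁻ z in cylOf y (n + 1), ENNReal.ofReal (Real.exp (q - D)) *
              (B.indicator 1 (shift^[n + 1] z)) ∂ν := by
            rw [lintegral_const_mul _ (show Measurable fun z : MarkovShift A =>
                B.indicator (1 : MarkovShift A → ℝ≥0∞) (shift^[n + 1] z) from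
                (measurable_one.indicator hB).comp (measurable_shift.iterate (n+1)))]
            congr 1
            have e : ∀ z : MarkovShift A, B.indicator (1 : MarkovShift A → ℝ≥0∞) (shift^[n + 1] z)
                = (shift^[n + 1] ⁻¹' B).indicator 1 z := fun z => rfl
            simp_rw [e]
            rw [setLIntegral_indicator hBm, Set.inter_comm]
            simp
      _ ≤ _ := by
            apply setLIntegral_mono' hcm
            intro z hz
            have := (abs_le.1 (hD (n + 1) z y hz)).2
            refine mul_le_mul_left (ENNReal.ofReal_le_ofReal (Real.exp_le_exp.2 ?_)) _
            linarith
      _ = _ := this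
      _ ≤ ∫⁻ x, B.indicator 1 x ∂ν := setLIntegral_le_lintegral _ _
      _ = ν B := lintegral_indicator_one hB
  have h3 := (hc _ adm).trans (mul_le_mul_right h1 _)
  constructor
  · rw [pos_iff_ne_zero]
    intro h0
    rw [h0] at h3
    simp at h3
  · calc _ = ENNReal.ofReal (Real.exp (-(q - D))) * (ENNReal.ofReal (Real.exp (q - D)) *
            ν (cylOf y (n + 1) ∩ shift^[n + 1] ⁻¹' B)) := (exp_mul_cancel _ _).symm
      _ ≤ ENNReal.ofReal (Real.exp (-(q - D))) * ν B := by gcongr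
      _ = ENNReal.ofReal (Real.exp (-(q - D))) * (1 * ν B) := by rw [one_mul]
      _ ≤ ENNReal.ofReal (Real.exp (-(q - D))) * ((ENNReal.ofReal (Real.exp c) *
          (ENNReal.ofReal (Real.exp (q + D)) * ν (cylOf y (n + 1)))) * ν B) := by gcongr
      _ = _ := by
        have : Real.exp (2 * D + c) = Real.exp (-(q-D)) * Real.exp c * Real.exp (q + D) := by
          rw [← Real.exp_add, ← Real.exp_add]; ring_nf
        rw [this, ENNReal.ofReal_mul (by positivity), ENNReal.ofReal_mul (by positivity)]
        ring

theorem eigen_ennreal {g : MarkovShift A → ℝ} {p : ℝ}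
    {h : MarkovShift A → ℝ} {ν : Measure (MarkovShift A)} (hR : IsRPF g p h ν) (x : MarkovShift A) :
    ENNReal.ofReal (Real.exp p) * ENNReal.ofReal (h x) =
      ∑' a : ℕ, (fol A a).indicator (fun x => ENNReal.ofReal (Real.exp (g (consS a x)))
        * ENNReal.ofReal (h (consS a x))) x := by
  obtain ⟨-, hpos, heig, -⟩ := hR
  rw [← ENNReal.ofReal_mul (Real.exp_pos _).le, ← heig x]
  have hs : Summable fun y : {y : MarkovShift A // shift y = x} => Real.exp (g y.1) * h y.1 := by
    by_contra hns
    have := heig x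
    rw [ruelle, tsum_eq_zero_of_not_summable hns] at this
    have := hpos x
    have := Real.exp_pos p
    nlinarith [mul_pos this ‹0 < h x›]
  have hnn : ∀ y : {y : MarkovShift A // shift y = x}, 0 ≤ Real.exp (g y.1) * h y.1 :=
    fun y => (mul_pos (Real.exp_pos _) (hpos _)).le
  rw [ruelle, ENNReal.ofReal_tsum_of_nonneg hnn hs]
  have hfol : ∀ y : {y : MarkovShift A // shift y = x}, A (y.1.1 0) (x.1 0) = true := by
    rintro ⟨y, rfl⟩
    exact y.2 0
  have hinj : Function.Injective (fun y : {y : MarkovShift A // shift y = x} => y.1.1 0) := by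
    intro y z hyz
    exact Subtype.ext (ext_shift hyz (y.2.trans z.2.symm))
  rw [← hinj.tsum_eq]
  · congr 1
    funext y
    rw [Set.indicator_of_mem (show x ∈ fol A (y.1.1 0) from hfol y)]
    have : consS (y.1.1 0) x = y.1 := by
      obtain ⟨y, rfl⟩ := y
      exact consS_shift y
    rw [this, ENNReal.ofReal_mul (Real.exp_pos _).le]
  · intro a ha
    have hx : x ∈ fol A a := by
      by_contra hx
      exact ha (Set.indicator_of_notMem hx _)
    exact ⟨⟨consS a x, shift_consS hx⟩, consS_zero hx⟩

theorem iUnion_sym_disj : Pairwise (Function.onFun Disjoint (sym A)) := by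
  intro c d hcd
  apply Set.disjoint_left.2
  intro x (hx : _ = _) (hx' : _ = _)
  exact hcd (hx.symm.trans hx')

theorem gibbs_invariant {g : MarkovShift A → ℝ} (hg : Continuous g) {V : ℝ}
    (hV : ∀ x y : MarkovShift A, x.1 0 = y.1 0 → |g x - g y| ≤ V) {p : ℝ}
    {h : MarkovShift A → ℝ} {ν : Measure (MarkovShift A)} (hR : IsRPF g p h ν)
    {B : Set (MarkovShift A)} (hB : MeasurableSet B) :
    gibbs h ν (shift ⁻¹' B) = gibbs h ν B := by
  have hhc : Continuous h := hR.1
  have hhm : Measurable fun x : MarkovShift A => ENNReal.ofReal (h x) := hhc.measurable.ennreal_ofReal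
  have hBm : MeasurableSet (shift ⁻¹' B : Set (MarkovShift A)) := measurable_shift hB
  set Q : ℕ → MarkovShift A → ℝ≥0∞ := fun a x => ENNReal.ofReal (Real.exp (g (consS a x)))
        * ENNReal.ofReal (h (consS a x)) with hQ
  have hQm : ∀ a, Measurable (Q a) := by
    intro a
    have hc := continuous_consS (A := A) a
    exact ((Real.continuous_exp.comp (hg.comp hc)).measurable.ennreal_ofReal).mul
      (hhc.comp hc).measurable.ennreal_ofReal
  have main : ENNReal.ofReal (Real.exp p) * gibbs h ν B
      = ENNReal.ofReal (Real.exp p) * gibbs h ν (shift ⁻¹' B) := by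
    unfold gibbs
    rw [withDensity_apply _ hB, withDensity_apply _ hBm, ← lintegral_const_mul _ hhm]
    simp_rw [eigen_ennreal hR]
    rw [lintegral_tsum fun a => ((hQm a).indicator (isClopen_fol a).isOpen.measurableSet).aemeasurable]
    have hsplit : (shift ⁻¹' B : Set (MarkovShift A)) = ⋃ a, (sym A a ∩ shift ⁻¹' B) := by
      ext x; simp [sym]
    rw [hsplit, lintegral_iUnion (fun a => (isClopen_sym a).isOpen.measurableSet.inter hBm)
      (fun a b hab => (iUnion_sym_disj hab).mono Set.inter_subset_left Set.inter_subset_left),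
      ← ENNReal.tsum_mul_left]
    congr 1
    funext a
    rw [← lintegral_const_mul _ hhm, setLIntegral_indicator (isClopen_fol a).isOpen.measurableSet,
      Set.inter_comm (sym A a), ← setLIntegral_indicator hBm, Set.inter_comm (fol A a)]
    have h1 := conf_one_lintegral hg hV hR a (G := B.indicator (Q a)) ((hQm a).indicator hB)
    rw [setLIntegral_indicator hB] at h1
    refine h1.symm.trans ?_
    apply setLIntegral_congr_fun (isClopen_sym a).isOpen.measurableSet
    intro z hz
    have hz' : consS a (shift z) = z := by
      have : z.1 0 = a := hz
      rw [← this, consS_shift]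
    by_cases hzB : shift z ∈ B
    · simp only []
      rw [Set.indicator_of_mem hzB, Set.indicator_of_mem (show z ∈ shift ⁻¹' B from hzB), hQ]
      simp only [hz']
      rw [← mul_assoc, ← ENNReal.ofReal_mul (Real.exp_pos _).le, ← Real.exp_add]
      simp
    · simp only []
      rw [Set.indicator_of_notMem hzB, Set.indicator_of_notMem (show z ∉ shift ⁻¹' B from hzB), mul_zero]
  exact ((ENNReal.mul_right_inj (by simp [Real.exp_pos]) ENNReal.ofReal_ne_top).1 main).symm

/-- The first `n` coordinates. -/
def proj (n : ℕ) (x : MarkovShift A) : Fin n → ℕ := fun i => x.1 i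

theorem continuous_proj (n : ℕ) : Continuous (proj n : MarkovShift A → (Fin n → ℕ)) :=
  continuous_pi fun i => continuous_coord i

theorem proj_fibre (n : ℕ) (y : MarkovShift A) : proj n ⁻¹' {proj n y} = cylOf y n := by
  ext z
  simp only [Set.mem_preimage, Set.mem_singleton_iff, funext_iff, proj, cylOf]
  exact ⟨fun hz i hi => hz ⟨i, hi⟩, fun hz i => hz i i.2⟩

/-- Infimum of `H` over the cylinder given by the word `w`. -/
noncomputable def infW (H : MarkovShift A → ℝ≥0∞) (n : ℕ) (w : Fin n → ℕ) : ℝ≥0∞ :=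
  ⨅ y : {y : MarkovShift A // proj n y = w}, H y.1

theorem lintegral_infW_le {ν : Measure (MarkovShift A)} {M : ℝ≥0∞}
    (hQB : ∀ (n : ℕ) (y : MarkovShift A) (B : Set (MarkovShift A)), MeasurableSet B →
      ν (cylOf y (n + 1) ∩ shift^[n + 1] ⁻¹' B) ≤ M * ν (cylOf y (n + 1)) * ν B)
    (ψ : (n : ℕ) → (Fin n → ℕ) → ℝ≥0∞) (n : ℕ) {B : Set (MarkovShift A)} (hB : MeasurableSet B) :
    ∫⁻ x in shift^[n + 1] ⁻¹' B, ψ (n + 1) (proj (n + 1) x) ∂ν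
      ≤ M * ν B * ∫⁻ x, ψ (n + 1) (proj (n + 1) x) ∂ν := by
  have hpm : Measurable (proj (n + 1) : MarkovShift A → (Fin (n + 1) → ℕ)) :=
    measurable_pi_lambda _ fun i => (continuous_coord (A := A) i).measurable
  have hψ : Measurable (ψ (n + 1)) := measurable_of_countable _
  rw [← lintegral_map hψ hpm, ← lintegral_map hψ hpm, lintegral_countable', lintegral_countable',
    ← ENNReal.tsum_mul_left]
  apply ENNReal.tsum_le_tsum
  intro w
  rw [Measure.map_apply hpm (measurableSet_singleton _), Measure.map_apply hpm (measurableSet_singleton _),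
    Measure.restrict_apply (hpm (measurableSet_singleton _))]
  by_cases hne : ∃ y : MarkovShift A, proj (n + 1) y = w
  · obtain ⟨y, rfl⟩ := hne
    rw [proj_fibre]
    refine (mul_le_mul_right (hQB n y B hB) _).trans (le_of_eq ?_)
    ring
  · have : (proj (n + 1) ⁻¹' {w} : Set (MarkovShift A)) = ∅ := by
      ext y; simp; exact fun hy => hne ⟨y, hy⟩
    rw [this]; simp

theorem gibbs_le {h : MarkovShift A → ℝ} {ν : Measure (MarkovShift A)} (hc : Continuous h)
    (hint : ∫⁻ x, ENNReal.ofReal (h x) ∂ν = 1) {M : ℝ≥0∞}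
    (hQB : ∀ (n : ℕ) (y : MarkovShift A) (B : Set (MarkovShift A)), MeasurableSet B →
      ν (cylOf y (n + 1) ∩ shift^[n + 1] ⁻¹' B) ≤ M * ν (cylOf y (n + 1)) * ν B)
    (hinv : ∀ B : Set (MarkovShift A), MeasurableSet B → gibbs h ν (shift ⁻¹' B) = gibbs h ν B)
    {B : Set (MarkovShift A)} (hB : MeasurableSet B) :
    gibbs h ν B ≤ M * ν B := by
  set H : MarkovShift A → ℝ≥0∞ := fun x => ENNReal.ofReal (h x) with hH
  have hHc : Continuous H := ENNReal.continuous_ofReal.comp hc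
  have hHm : Measurable H := hHc.measurable
  have hpm : ∀ n, Measurable (proj n : MarkovShift A → (Fin n → ℕ)) := fun n =>
    measurable_pi_lambda _ fun i => (continuous_coord (A := A) i).measurable
  set Hn : ℕ → MarkovShift A → ℝ≥0∞ := fun n x => infW H n (proj n x) with hHn
  have hHnm : ∀ n, Measurable (Hn n) := fun n =>
    (measurable_of_countable (infW H n)).comp (hpm n)
  have hle : ∀ n x, Hn n x ≤ H x := fun n x => iInf_le_of_le ⟨x, rfl⟩ le_rfl
  have hmono : Monotone Hn := by
    intro n m hnm x
    apply le_iInf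
    rintro ⟨y, hy⟩
    refine iInf_le_of_le ⟨y, ?_⟩ le_rfl
    funext i
    exact congrFun hy ⟨i, lt_of_lt_of_le i.2 hnm⟩
  have hsup : ∀ x, ⨆ n, Hn n x = H x := by
    intro x
    apply le_antisymm (iSup_le fun n => hle n x)
    apply le_of_forall_lt
    intro c hcx
    obtain ⟨d, hcd, hdx⟩ := exists_between hcx
    have hop : IsOpen {y | d < H y} := isOpen_lt continuous_const hHc
    obtain ⟨n, hn⟩ : ∃ n, cylOf x n ⊆ {y | d < H y} := by
      obtain ⟨U, hU, hUe⟩ := isOpen_induced_iff.1 hop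
      have hxU : x.1 ∈ U := by
        have : x ∈ (Subtype.val ⁻¹' U : Set (MarkovShift A)) := hUe ▸ hdx
        exact this
      obtain ⟨I, u, hu, hsub⟩ := isOpen_pi_iff.1 hU x.1 hxU
      refine ⟨I.sup id + 1, fun y hy => ?_⟩
      have : y ∈ (Subtype.val ⁻¹' U : Set (MarkovShift A)) := by
        apply hsub
        intro i hi
        rw [hy i (Nat.lt_succ_of_le (Finset.le_sup (f := id) hi))]
        exact (hu i hi).2
      exact hUe ▸ this
    refine lt_of_lt_of_le (lt_of_lt_of_le hcd ?_) (le_iSup (fun n => Hn n x) n)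
    apply le_iInf
    rintro ⟨y, hy⟩
    have : y ∈ cylOf x n := by rw [← proj_fibre]; exact hy
    exact le_of_lt (hn this)
  have hlim : Tendsto (fun n => ∫⁻ x, Hn n x ∂ν) atTop (𝓝 1) := by
    rw [← hint]
    refine lintegral_tendsto_of_tendsto_of_monotone (fun n => (hHnm n).aemeasurable) ?_ ?_
    · exact Filter.Eventually.of_forall fun x => fun n m hnm => hmono hnm x
    · refine Filter.Eventually.of_forall fun x => ?_
      have := tendsto_atTop_iSup (f := fun n => Hn n x) (fun n m hnm => hmono hnm x)
      rwa [hsup x] at this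
  have hinvn : ∀ n, gibbs h ν (shift^[n] ⁻¹' B) = gibbs h ν B := by
    intro n
    induction n with
    | zero => simp
    | succ n ih =>
      rw [Function.iterate_succ, Set.preimage_comp, hinv _ (measurable_shift.iterate n hB), ih]
  have key : ∀ n : ℕ, gibbs h ν B + ∫⁻ x, Hn (n + 1) x ∂ν ≤ M * ν B + 1 := by
    intro n
    have hEm : MeasurableSet (shift^[n + 1] ⁻¹' B : Set (MarkovShift A)) := measurable_shift.iterate _ hB
    rw [← hinvn (n + 1), gibbs, withDensity_apply _ hEm, ← lintegral_indicator hEm]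
    calc _ = ∫⁻ x, ((shift^[n + 1] ⁻¹' B).indicator H x + Hn (n + 1) x) ∂ν := by
            rw [lintegral_add_left (hHm.indicator hEm)]
      _ ≤ ∫⁻ x, ((shift^[n + 1] ⁻¹' B).indicator (Hn (n+1)) x + H x) ∂ν := by
            apply lintegral_mono
            intro x
            by_cases hx : x ∈ shift^[n + 1] ⁻¹' B
            · simp only [Set.indicator_of_mem hx]
              rw [add_comm]
            · simp only [Set.indicator_of_notMem hx, zero_add]
              exact hle _ _
      _ = ∫⁻ x in shift^[n + 1] ⁻¹' B, Hn (n + 1) x ∂ν + 1 := by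
            rw [lintegral_add_right _ hHm, hint, lintegral_indicator hEm]
      _ ≤ M * ν B * ∫⁻ x, Hn (n + 1) x ∂ν + 1 := by
            gcongr
            exact lintegral_infW_le hQB (infW H) n hB
      _ ≤ M * ν B * 1 + 1 := by
            gcongr
            rw [← hint]
            exact lintegral_mono (hle _)
      _ = _ := by rw [mul_one]
  have hl2 : Tendsto (fun n => gibbs h ν B + ∫⁻ x, Hn (n + 1) x ∂ν) atTop (𝓝 (gibbs h ν B + 1)) :=
    tendsto_const_nhds.add ((tendsto_add_atTop_iff_nat 1).2 hlim)
  have := le_of_tendsto' hl2 key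
  exact (ENNReal.add_le_add_iff_right ENNReal.one_ne_top).1 this

theorem exists_periodic (l : List ℕ) (hl : 0 < l.length)
    (hch : List.IsChain (fun u v => A u v = true) (l ++ [l[0]])) :
    ∃ x : MarkovShift A, shift^[l.length] x = x ∧ ∀ i (hi : i < l.length), x.1 i = l[i] := by
  refine ⟨⟨fun i => l[i % l.length]'(Nat.mod_lt _ hl), fun i => ?_⟩, ?_, ?_⟩
  · rw [List.isChain_iff_getElem] at hch
    have hk := Nat.mod_lt i hl
    have h1 := hch (i % l.length) (by simp; omega)
    rw [List.getElem_append_left hk] at h1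
    by_cases hlt : i % l.length + 1 < l.length
    · rw [List.getElem_append_left hlt] at h1
      have e : (i + 1) % l.length = i % l.length + 1 := by
        rw [Nat.add_mod, Nat.mod_eq_of_lt (show 1 < l.length by omega), Nat.mod_eq_of_lt hlt]
      simp only [e]
      exact h1
    · have hn : i % l.length + 1 = l.length := by omega
      have e : (i + 1) % l.length = 0 := by
        rw [← Nat.mod_add_mod, hn, Nat.mod_self]
      simp only [e]
      rw [List.getElem_append_right (by omega)] at h1
      simpa [hn] using h1
  · apply Subtype.ext
    funext i
    refine (shift_iter_coord _ _ _).trans ?_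
    simp
  · intro i hi
    simp [Nat.mod_eq_of_lt hi]

theorem exists_F_bound {f : MarkovShift A → ℝ} {V : ℝ}
    (hV : ∀ x y : MarkovShift A, x.1 0 = y.1 0 → |f x - f y| ≤ V) (F : Finset ℕ) :
    ∃ C, 0 ≤ C ∧ ∀ z : MarkovShift A, z.1 0 ∈ F → -C ≤ f z := by
  choose C hC using fun a => exists_sym_bound hV a
  refine ⟨∑ a ∈ F, |C a|, Finset.sum_nonneg fun a _ => abs_nonneg _, fun z hz => ?_⟩
  have h1 := (abs_le.1 (hC (z.1 0) z rfl)).1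
  have h2 := Finset.single_le_sum (f := fun a => |C a|) (fun a _ => abs_nonneg _) hz
  have h3 := le_abs_self (C (z.1 0))
  linarith

theorem exists_weight {f : MarkovShift A → ℝ} {V : ℝ}
    (hV : ∀ x y : MarkovShift A, x.1 0 = y.1 0 → |f x - f y| ≤ V)
    {K : ℕ} {F : Finset ℕ} (hF : ∀ a b : ℕ, Admissible A a → Admissible A b →
      ∃ w : List ℕ, w.length = K ∧ (∀ c ∈ w, c ∈ F) ∧
        List.IsChain (fun u v => A u v = true) (a :: (w ++ [b])))
    {p : ℝ} (hP : HasGurevichPressure f p) {a₀ : ℕ} (ha₀ : Admissible A a₀) :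
    ∃ t : ℕ → ℝ, (∀ a, 0 ≤ t a) ∧ Summable t ∧ ∀ z, Real.exp (f z) ≤ t (z.1 0) := by
  classical
  have hper : ∀ b : {b // Admissible A b}, ∃ x : MarkovShift A, shift^[2 * K + 2] x = x ∧
      x.1 0 = a₀ ∧ x.1 (K + 1) = b ∧ ∀ j < 2 * K + 2, j ≠ K + 1 → x.1 j ∈ insert a₀ F := by
    rintro ⟨b, hb⟩
    obtain ⟨w₁, hl₁, hw₁, hc₁⟩ := hF a₀ b ha₀ hb
    obtain ⟨w₂, hl₂, hw₂, hc₂⟩ := hF b a₀ hb ha₀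
    have hlen : ((a₀ :: w₁) ++ (b :: w₂)).length = 2 * K + 2 := by simp [hl₁, hl₂]; omega
    have hch : List.IsChain (fun u v => A u v = true)
        (((a₀ :: w₁) ++ (b :: w₂)) ++ [((a₀ :: w₁) ++ (b :: w₂))[0]]) := by
      have := List.IsChain.append_overlap (l₁ := a₀ :: w₁) (l₂ := [b]) (l₃ := w₂ ++ [a₀])
        (by simpa using hc₁) (by simpa using hc₂) (by simp)
      simpa using this
    obtain ⟨x, hx, hxi⟩ := exists_periodic _ (by omega) hch
    rw [hlen] at hx
    refine ⟨x, hx, ?_, ?_, ?_⟩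
    · rw [hxi 0 (by omega)]; simp
    · rw [hxi (K + 1) (by omega), List.getElem_append_right (by simp [hl₁])]
      simp [hl₁]
    · intro j hj hjK
      rw [hxi j (by omega)]
      rcases lt_or_gt_of_ne hjK with hlt | hgt
      · rw [List.getElem_append_left (by simp [hl₁]; omega)]
        have := List.getElem_mem (l := a₀ :: w₁) (n := j) (by simp [hl₁]; omega)
        rcases List.mem_cons.1 this with h | h
        · rw [h]; exact Finset.mem_insert_self _ _
        · exact Finset.mem_insert_of_mem (hw₁ _ h)
      · rw [List.getElem_append_right (by simp [hl₁]; omega)]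
        have e : j - (a₀ :: w₁).length = (j - (K + 2)) + 1 := by simp [hl₁]; omega
        simp only [e, List.getElem_cons_succ]
        exact Finset.mem_insert_of_mem (hw₂ _ (List.getElem_mem _))
  choose X hXp hX0 hXK hXF using hper
  obtain ⟨C, hC0, hC⟩ := exists_F_bound hV (insert a₀ F)
  have hsum := (hP a₀ ha₀).1 (2 * K + 2) (by omega)
  have hinj : Function.Injective (fun b : {b // Admissible A b} =>
      (⟨X b, hXp b, hX0 b⟩ : {x : MarkovShift A // shift^[2 * K + 2] x = x ∧ x.1 0 = a₀})) := by
    intro b c hbc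
    have : X b = X c := congrArg Subtype.val hbc
    apply Subtype.ext
    rw [← hXK b, ← hXK c, this]
  have hsum2 := hsum.comp_injective hinj
  have hbound : ∀ b : {b // Admissible A b}, f (shift^[K + 1] (X b)) ≤
      birkhoff f (2 * K + 2) (X b) + (2 * K + 2 : ℕ) * C := by
    intro b
    unfold birkhoff
    rw [← Finset.add_sum_erase _ _ (Finset.mem_range.2 (show K + 1 < 2 * K + 2 by omega))]
    have h1 : ((Finset.range (2 * K + 2)).erase (K + 1)).card • (-C) ≤
        ∑ j ∈ (Finset.range (2 * K + 2)).erase (K + 1), f (shift^[j] (X b)) := by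
      apply Finset.card_nsmul_le_sum
      intro j hj
      rw [Finset.mem_erase, Finset.mem_range] at hj
      apply hC
      rw [shift_iter_coord]
      exact hXF b j hj.2 hj.1
    rw [nsmul_eq_mul] at h1
    have h2 : (((Finset.range (2 * K + 2)).erase (K + 1)).card : ℝ) ≤ (2 * K + 2 : ℕ) := by
      exact_mod_cast (Finset.card_erase_le).trans (Finset.card_range _).le
    nlinarith
  have hs3 : Summable fun b : {b // Admissible A b} => Real.exp (f (shift^[K + 1] (X b)) + V) := by
    refine Summable.of_nonneg_of_le (fun b => (Real.exp_pos _).le) (fun b => ?_)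
      (hsum2.mul_left (Real.exp ((2 * K + 2 : ℕ) * C + V)))
    simp only [Function.comp]
    rw [← Real.exp_add]
    apply Real.exp_le_exp.2
    have := hbound b
    linarith
  refine ⟨fun a => if ha : Admissible A a then Real.exp (f (shift^[K + 1] (X ⟨a, ha⟩)) + V) else 0,
    fun a => ?_, ?_, fun z => ?_⟩
  · dsimp only
    split_ifs
    · exact (Real.exp_pos _).le
    · exact le_rfl
  · have hind := summable_subtype_iff_indicator (s := {a | Admissible A a})
      (f := fun a => if ha : Admissible A a then Real.exp (f (shift^[K + 1] (X ⟨a, ha⟩)) + V) else 0)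
    have h1 := hind.1 (by
      refine hs3.congr fun b => ?_
      have := b.2
      simp only [Function.comp]
      rw [dif_pos (show Admissible A (b : ℕ) from b.2)])
    refine h1.congr fun a => ?_
    by_cases ha : Admissible A a
    · rw [Set.indicator_of_mem (show a ∈ {a | Admissible A a} from ha)]
    · rw [Set.indicator_of_notMem (show a ∉ {a | Admissible A a} from ha), dif_neg ha]
  · have ha : Admissible A (z.1 0) := ⟨z, rfl⟩
    simp only [ha, dite_true]
    apply Real.exp_le_exp.2
    have h1 := hV z (shift^[K + 1] (X ⟨z.1 0, ha⟩)) (by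
      rw [shift_iter_coord]; exact (hXK ⟨z.1 0, ha⟩).symm)
    have := (abs_le.1 h1).2
    linarith

theorem exists_bip_pos (hbip : FinitelyPrimitive A) {a₀ : ℕ} (ha₀ : Admissible A a₀) :
    ∃ K : ℕ, 0 < K ∧ ∃ F : Finset ℕ, ∀ a b : ℕ, Admissible A a → Admissible A b →
      ∃ w : List ℕ, w.length = K ∧ (∀ c ∈ w, c ∈ F) ∧
        List.IsChain (fun u v => A u v = true) (a :: (w ++ [b])) := by
  obtain ⟨K, F, hF⟩ := hbip
  rcases Nat.eq_zero_or_pos K with rfl | hK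
  · refine ⟨1, one_pos, {a₀}, fun a b ha hb => ⟨[a₀], rfl, by simp, ?_⟩⟩
    obtain ⟨w, hw, -, h1⟩ := hF a a₀ ha ha₀
    obtain ⟨w', hw', -, h2⟩ := hF a₀ b ha₀ hb
    rw [List.length_eq_zero_iff] at hw hw'
    subst hw hw'
    have h1' : List.IsChain (fun u v => A u v = true) [a, a₀] := h1
    have h2' : List.IsChain (fun u v => A u v = true) [a₀, b] := h2
    simp only [List.isChain_pair] at h1' h2'
    simp only [List.cons_append, List.nil_append, List.isChain_cons_cons, List.isChain_singleton, and_true]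
    exact ⟨h1', h2'⟩
  · exact ⟨K, hK, F, hF⟩

theorem tail_nu {f : MarkovShift A → ℝ} (hf : Continuous f) {V : ℝ}
    (hV : ∀ x y : MarkovShift A, x.1 0 = y.1 0 → |f x - f y| ≤ V)
    {t : ℕ → ℝ} (ht0 : ∀ a, 0 ≤ t a) (ht : Summable t) (hft : ∀ z, Real.exp (f z) ≤ t (z.1 0))
    {β : ℝ} (hβ : 1 < β) {p : ℝ} {h : MarkovShift A → ℝ} {ν : Measure (MarkovShift A)}
    (hR : IsRPF (fun x => β * f x) p h ν) (N : ℕ) :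
    ν {x | N ≤ x.1 0} ≤ ENNReal.ofReal (Real.exp (-p) * (∑' a, t (a + N)) ^ β) := by
  set T := ∑' a, t (a + N) with hT
  have htN : Summable fun a => t (a + N) := (summable_nat_add_iff N).2 ht
  have hT0 : 0 ≤ T := tsum_nonneg fun a => ht0 _
  have hgV : ∀ x y : MarkovShift A, x.1 0 = y.1 0 → |β * f x - β * f y| ≤ β * V := by
    intro x y hxy
    rw [← mul_sub, abs_mul, abs_of_pos (by linarith : 0 < β)]
    exact mul_le_mul_of_nonneg_left (hV x y hxy) (by linarith)
  have hgc : Continuous fun x => β * f x := continuous_const.mul hf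
  have hsym : ∀ a, ν (sym A a) ≤ ENNReal.ofReal (Real.exp (-p) * t a ^ β) := by
    intro a
    by_cases hne : (sym A a).Nonempty
    · obtain ⟨y, hy⟩ := hne
      have hta : 0 < t a := by
        have := hft y
        rw [show y.1 0 = a from hy] at this
        exact (Real.exp_pos _).trans_le this
      have := sym_upper hgc hgV hR a (s := β * Real.log (t a)) (by
        intro z hz
        have h1 := hft z
        rw [show z.1 0 = a from hz] at h1
        have := (Real.le_log_iff_exp_le hta).2 h1
        exact mul_le_mul_of_nonneg_left this (by linarith))
      refine this.trans (le_of_eq ?_)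
      rw [Real.rpow_def_of_pos hta, ← Real.exp_add]
      congr 2; ring
    · rw [Set.not_nonempty_iff_eq_empty.1 hne]; simp
  have hsub : {x : MarkovShift A | N ≤ x.1 0} ⊆ ⋃ a, sym A (a + N) := by
    intro x hx
    refine Set.mem_iUnion.2 ⟨x.1 0 - N, ?_⟩
    have : N ≤ x.1 0 := hx
    show x.1 0 = _
    omega
  have hβ' : T ^ β = T ^ (β - 1) * T := by
    rw [← Real.rpow_add_one' hT0 (by linarith)]; congr 1; ring
  calc _ ≤ _ := measure_mono hsub
    _ ≤ ∑' a, ν (sym A (a + N)) := measure_iUnion_le _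
    _ ≤ ∑' a, ENNReal.ofReal (Real.exp (-p) * T ^ (β - 1) * t (a + N)) := by
      apply ENNReal.tsum_le_tsum
      intro a
      refine (hsym _).trans (ENNReal.ofReal_le_ofReal ?_)
      rw [mul_assoc]
      refine mul_le_mul_of_nonneg_left ?_ (Real.exp_pos _).le
      have hta := ht0 (a + N)
      have : t (a + N) ^ β = t (a + N) ^ (β - 1) * t (a + N) := by
        rw [← Real.rpow_add_one' hta (by linarith)]; congr 1; ring
      rw [this]
      refine mul_le_mul_of_nonneg_right ?_ hta
      refine Real.rpow_le_rpow hta ?_ (by linarith)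
      exact htN.le_tsum a fun b _ => ht0 _
    _ = ENNReal.ofReal (Real.exp (-p) * T ^ (β - 1) * T) := by
      rw [← ENNReal.ofReal_tsum_of_nonneg (fun a => mul_nonneg (by positivity) (ht0 _)) (htN.mul_left _),
        tsum_mul_left]
    _ = _ := by rw [hβ', mul_assoc]

theorem birkhoff_const_mul (β : ℝ) (f : MarkovShift A → ℝ) (n : ℕ) (x : MarkovShift A) :
    birkhoff (fun x => β * f x) n x = β * birkhoff f n x := by
  simp [birkhoff, Finset.mul_sum]

/-- All the facts about the Gibbs measures, with bounds uniform in `β`. -/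
theorem gibbs_facts (hbip : FinitelyPrimitive A) {f : MarkovShift A → ℝ}
    (hW : SatisfiesWalters f) (hV1 : Var1Finite f) {p₁ : ℝ} (hP : HasGurevichPressure f p₁)
    (hne : Nonempty (MarkovShift A)) :
    ∃ T : ℕ → ℝ, (∀ N, 0 ≤ T N) ∧ Tendsto T atTop (𝓝 0) ∧
      ∀ (β p : ℝ) (h : MarkovShift A → ℝ) (ν : Measure (MarkovShift A)), 1 < β →
        IsRPF (fun x => β * f x) p h ν →
        IsProbabilityMeasure (gibbs h ν) ∧
        (∀ B : Set (MarkovShift A), MeasurableSet B → gibbs h ν (shift ⁻¹' B) = gibbs h ν B) ∧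
        (∀ y n, 0 < gibbs h ν (cylOf y n)) ∧
        ∀ N, gibbs h ν {x | N ≤ x.1 0} ≤ ENNReal.ofReal (T N ^ β) := by
  obtain ⟨x₀⟩ := hne
  have ha₀ : Admissible A (x₀.1 0) := ⟨x₀, rfl⟩
  obtain ⟨K, hK, F, hF⟩ := exists_bip_pos hbip ha₀
  obtain ⟨V, hV0, hV⟩ := exists_var1 hV1
  obtain ⟨D, hD0, hD⟩ := exists_distortion hW hV1
  obtain ⟨C, hC0, hC⟩ := exists_F_bound hV F
  obtain ⟨t, ht0, ht, hft⟩ := exists_weight hV hF hP ha₀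
  have hfc := continuous_of_walters hW
  set T₀ := ∑' a, t (a + 0) with hT₀
  have hT₀pos : 0 < T₀ := by
    have h1 := (Real.exp_pos _).trans_le (hft x₀)
    have h2 := ht.le_tsum (x₀.1 0) fun b _ => ht0 _
    exact h1.trans_le h2
  set G := Real.log T₀ with hG
  set C₁ := 2 * D + K * (G + C) + C with hC₁
  refine ⟨fun N => Real.exp C₁ * ∑' a, t (a + N),
    fun N => mul_nonneg (Real.exp_pos _).le (tsum_nonneg fun a => ht0 _), ?_, ?_⟩
  · have := (tendsto_sum_nat_add t).const_mul (Real.exp C₁)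
    simpa using this
  · intro β p h ν hβ hR
    have hβ0 : 0 < β := by linarith
    obtain ⟨hhc, hhpos, -, hprob, -, hint⟩ := id hR
    have hgc : Continuous fun x => β * f x := continuous_const.mul hfc
    have hgV : ∀ x y : MarkovShift A, x.1 0 = y.1 0 → |β * f x - β * f y| ≤ β * V := by
      intro x y hxy
      rw [← mul_sub, abs_mul, abs_of_pos hβ0]
      exact mul_le_mul_of_nonneg_left (hV x y hxy) hβ0.le
    have hgD : ∀ n, ∀ x y : MarkovShift A, (∀ i < n, x.1 i = y.1 i) →
        |birkhoff (fun x => β * f x) n x - birkhoff (fun x => β * f x) n y| ≤ β * D := by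
      intro n x y hxy
      rw [birkhoff_const_mul, birkhoff_const_mul, ← mul_sub, abs_mul, abs_of_pos hβ0]
      exact mul_le_mul_of_nonneg_left (hD n x y hxy) hβ0.le
    have hgC : ∀ z : MarkovShift A, z.1 0 ∈ F → -(β * C) ≤ β * f z := by
      intro z hz
      have := mul_le_mul_of_nonneg_left (hC z hz) hβ0.le
      linarith
    have hlow := fun a (ha : Admissible A a) => fol_lower hgc hgV hR hF hgC ha
    have htail := fun N => tail_nu hfc hV ht0 ht hft hβ hR N
    have hint1 : Integrable h ν := by
      by_contra hni
      rw [integral_undef hni] at hint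
      exact zero_ne_one hint
    have hlint : ∫⁻ x, ENNReal.ofReal (h x) ∂ν = 1 := by
      rw [← ofReal_integral_eq_lintegral_ofReal hint1 (Filter.Eventually.of_forall fun x => (hhpos x).le),
        hint, ENNReal.ofReal_one]
    have hpup : p ≤ β * G := by
      have h1 := htail 0
      have e : {x : MarkovShift A | 0 ≤ x.1 0} = Set.univ := by ext; simp
      rw [e, measure_univ, ENNReal.one_le_ofReal, Real.rpow_def_of_pos hT₀pos, ← Real.exp_add,
        Real.one_le_exp_iff] at h1
      linarith
    have hplow : -(β * C) ≤ p := by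
      have h1 := (hlow _ ha₀).trans (mul_le_mul_right prob_le_one _)
      rw [mul_one, ENNReal.one_le_ofReal, Real.one_le_exp_iff] at h1
      have hK' : (0 : ℝ) < K := by exact_mod_cast hK
      have := nonneg_of_mul_nonneg_right h1 hK'
      linarith
    have hinv : ∀ B : Set (MarkovShift A), MeasurableSet B → gibbs h ν (shift ⁻¹' B) = gibbs h ν B :=
      fun B hB => gibbs_invariant hgc hgV hR hB
    refine ⟨⟨?_⟩, hinv, ?_, ?_⟩
    · rw [gibbs, withDensity_apply _ MeasurableSet.univ, Measure.restrict_univ, hlint]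
    · intro y n
      have hpos := (quasi_bernoulli hgc hgV hR hgD hlow n y MeasurableSet.univ).1
      have hcm : MeasurableSet (cylOf y (n + 1)) := (isClopen_cylOf y _).isOpen.measurableSet
      have hsub : cylOf y (n + 1) ⊆ cylOf y n := fun z hz i hi => hz i (by omega)
      refine lt_of_lt_of_le ?_ (measure_mono hsub)
      rw [gibbs, withDensity_apply _ hcm, setLIntegral_pos_iff hhc.measurable.ennreal_ofReal]
      have : Function.support (fun x => ENNReal.ofReal (h x)) = Set.univ := by
        ext x; simp [hhpos x]
      rw [this, Set.univ_inter]
      exact hpos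
    · intro N
      have hm : MeasurableSet {x : MarkovShift A | N ≤ x.1 0} :=
        (isClopen_coord 0 {b | N ≤ b}).isOpen.measurableSet
      refine (gibbs_le hhc hlint
        (fun n y B hB => (quasi_bernoulli hgc hgV hR hgD hlow n y hB).2) hinv hm).trans ?_
      refine (mul_le_mul_right (htail N) _).trans ?_
      have hTN : 0 ≤ ∑' a, t (a + N) := tsum_nonneg fun a => ht0 _
      rw [← ENNReal.ofReal_mul (Real.exp_pos _).le, Real.mul_rpow (Real.exp_pos _).le hTN,
        ← mul_assoc, ← Real.exp_add, ← Real.exp_mul]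
      apply ENNReal.ofReal_le_ofReal
      refine mul_le_mul_of_nonneg_right (Real.exp_le_exp.2 ?_) (Real.rpow_nonneg hTN _)
      have : (K : ℝ) * (p + β * C) ≤ K * (β * G + β * C) := by gcongr
      rw [hC₁]
      nlinarith

theorem mem_cylinder {w : List ℕ} {x : MarkovShift A} :
    x ∈ cylinder w ↔ ∀ i (hi : i < w.length), x.1 i = w[i] :=
  ⟨fun h i hi => h ⟨i, hi⟩, fun h i => h i i.2⟩

theorem mem_cylinder_append {w : List ℕ} {a : ℕ} {x : MarkovShift A} :
    x ∈ cylinder (w ++ [a]) ↔ x ∈ cylinder w ∧ x.1 w.length = a := by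
  rw [mem_cylinder, mem_cylinder]
  constructor
  · intro h
    refine ⟨fun i hi => ?_, ?_⟩
    · rw [h i (by simp; omega), List.getElem_append_left hi]
    · rw [h w.length (by simp)]; simp
  · rintro ⟨h1, h2⟩ i hi
    rcases Nat.lt_or_ge i w.length with hlt | hge
    · rw [List.getElem_append_left hlt, h1 i hlt]
    · have : i = w.length := by simp at hi; omega
      subst this
      simp [h2]

theorem cylinder_eq_cylOf {w : List ℕ} {y : MarkovShift A} (hy : y ∈ cylinder w) :
    cylinder w = cylOf y w.length := by
  rw [mem_cylinder] at hy
  ext z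
  rw [mem_cylinder]
  exact ⟨fun hz i hi => (hz i hi).trans (hy i hi).symm, fun hz i hi => (hz i hi).trans (hy i hi)⟩

/-- The word of the first `n` symbols. -/
def word (x : MarkovShift A) (n : ℕ) : List ℕ := List.ofFn fun i : Fin n => x.1 i

theorem cylinder_word (x : MarkovShift A) (n : ℕ) : cylinder (word x n) = cylOf x n := by
  have : x ∈ cylinder (word x n) := by
    rw [mem_cylinder]; intro i hi; simp [word]
  rw [cylinder_eq_cylOf this]
  simp [word]

theorem iter_inv {m : Measure (MarkovShift A)}
    (hinv : ∀ B : Set (MarkovShift A), MeasurableSet B → m (shift ⁻¹' B) = m B)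
    {B : Set (MarkovShift A)} (hB : MeasurableSet B) (n : ℕ) : m (shift^[n] ⁻¹' B) = m B := by
  induction n with
  | zero => simp
  | succ n ih =>
    rw [Function.iterate_succ, Set.preimage_comp, hinv _ (measurable_shift.iterate n hB), ih]

theorem tendsto_exp_mul {βs u : ℕ → ℝ} (hβ : Tendsto βs atTop atTop) {c : ℝ} (hc : c < 0)
    (hu : Tendsto u atTop (𝓝 c)) : Tendsto (fun i => Real.exp (βs i * u i)) atTop (𝓝 0) :=
  Real.tendsto_exp_atBot.comp (hβ.atTop_mul_neg hc hu)

section abstractPart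

variable {m : ℕ → Measure (MarkovShift A)} {βs : ℕ → ℝ} {L : List ℕ → ℝ}

theorem cyl_pos (hpos : ∀ i y n, 0 < m i (cylOf y n)) (hprob : ∀ i, IsProbabilityMeasure (m i))
    {w : List ℕ} (hw : (cylinder (A := A) w).Nonempty) (i : ℕ) : 0 < (m i (cylinder w)).toReal := by
  obtain ⟨y, hy⟩ := hw
  have := hprob i
  rw [cylinder_eq_cylOf hy]
  exact ENNReal.toReal_pos (hpos i y _).ne' (measure_ne_top _ _)

theorem L_mono (hpos : ∀ i y n, 0 < m i (cylOf y n)) (hprob : ∀ i, IsProbabilityMeasure (m i))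
    (hβs : ∀ i, 1 < βs i)
    (hL : ∀ w : List ℕ, Tendsto
      (fun i => (1 / βs i) * Real.log ((m i (cylinder w)).toReal)) atTop (𝓝 (L w)))
    {w w' : List ℕ} (hw : (cylinder (A := A) w').Nonempty)
    (hle : ∀ i, m i (cylinder w') ≤ m i (cylinder w)) : L w' ≤ L w := by
  refine le_of_tendsto_of_tendsto' (hL w') (hL w) fun i => ?_
  have := hprob i
  have h1 := hβs i
  refine mul_le_mul_of_nonneg_left ?_ (by positivity)
  exact Real.log_le_log (cyl_pos hpos hprob hw i) (ENNReal.toReal_mono (measure_ne_top _ _) (hle i))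

theorem L_step (hpos : ∀ i y n, 0 < m i (cylOf y n)) (hprob : ∀ i, IsProbabilityMeasure (m i))
    (hinv : ∀ i, ∀ B : Set (MarkovShift A), MeasurableSet B → m i (shift ⁻¹' B) = m i B)
    {T : ℕ → ℝ} (hT0 : ∀ N, 0 ≤ T N) (hT : Tendsto T atTop (𝓝 0))
    (htail : ∀ i N, m i {x | N ≤ x.1 0} ≤ ENNReal.ofReal (T N ^ βs i))
    (hβs : ∀ i, 1 < βs i) (hβtop : Tendsto βs atTop atTop)
    (hL : ∀ w : List ℕ, Tendsto
      (fun i => (1 / βs i) * Real.log ((m i (cylinder w)).toReal)) atTop (𝓝 (L w)))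
    {w : List ℕ} (hw : (cylinder (A := A) w).Nonempty) :
    ∃ a, (cylinder (A := A) (w ++ [a])).Nonempty ∧ L w ≤ L (w ++ [a]) := by
  by_contra! hcon
  obtain ⟨N, hN⟩ := (hT.eventually (gt_mem_nhds (Real.exp_pos (L w - 1)))).exists
  set q : ℕ → ℝ := fun i => (m i (cylinder w)).toReal with hq
  have hqpos : ∀ i, 0 < q i := cyl_pos hpos hprob hw
  have hqexp : ∀ i, q i = Real.exp (βs i * ((1 / βs i) * Real.log (q i))) := by
    intro i
    have := hβs i
    rw [← mul_assoc, mul_one_div_cancel (by linarith), one_mul, Real.exp_log (hqpos i)]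
  have h1 : ∀ a, Tendsto (fun i => (m i (cylinder (w ++ [a]))).toReal / q i) atTop (𝓝 0) := by
    intro a
    by_cases hne : (cylinder (A := A) (w ++ [a])).Nonempty
    · have hlt := hcon a hne
      have h2 := tendsto_exp_mul hβtop (sub_neg.2 hlt) ((hL (w ++ [a])).sub (hL w))
      refine h2.congr fun i => ?_
      have hb := hβs i
      rw [mul_sub, Real.exp_sub, ← hqexp, ← mul_assoc, mul_one_div_cancel (by linarith), one_mul,
        Real.exp_log (cyl_pos hpos hprob hne i)]
    · rw [Set.not_nonempty_iff_eq_empty.1 hne]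
      simp
  have h2 : Tendsto (fun i => T N ^ βs i / q i) atTop (𝓝 0) := by
    have h3 := tendsto_exp_mul hβtop (c := (L w - 1) - L w) (by linarith)
      ((tendsto_const_nhds (x := L w - 1)).sub (hL w))
    refine squeeze_zero (fun i => div_nonneg (Real.rpow_nonneg (hT0 N) _) (hqpos i).le) (fun i => ?_) h3
    have hb := hβs i
    rw [mul_sub, Real.exp_sub, ← hqexp]
    refine div_le_div_of_nonneg_right ?_ (hqpos i).le
    rw [mul_comm, Real.exp_mul]
    exact Real.rpow_le_rpow (hT0 N) hN.le (by linarith)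
  have h3 := (tendsto_finsetSum (Finset.range N) fun a _ => h1 a).add h2
  simp only [Finset.sum_const_zero, add_zero] at h3
  have h4 : ∀ i, 1 ≤ ∑ a ∈ Finset.range N, (m i (cylinder (w ++ [a]))).toReal / q i
      + T N ^ βs i / q i := by
    intro i
    have := hprob i
    rw [← Finset.sum_div, ← add_div, one_le_div (hqpos i)]
    have hsub : cylinder (A := A) w ⊆ (⋃ a ∈ Finset.range N, cylinder (w ++ [a])) ∪
        shift^[w.length] ⁻¹' {x | N ≤ x.1 0} := by
      intro x hx
      rcases Nat.lt_or_ge (x.1 w.length) N with hlt | hge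
      · left
        simp only [Set.mem_iUnion]
        exact ⟨x.1 w.length, Finset.mem_range.2 hlt, mem_cylinder_append.2 ⟨hx, rfl⟩⟩
      · right
        show N ≤ (shift^[w.length] x).1 0
        rw [shift_iter_coord]
        exact hge
    have hm : MeasurableSet {x : MarkovShift A | N ≤ x.1 0} :=
      (isClopen_coord 0 {b | N ≤ b}).isOpen.measurableSet
    have h5 : m i (cylinder w) ≤ ∑ a ∈ Finset.range N, m i (cylinder (w ++ [a]))
        + ENNReal.ofReal (T N ^ βs i) := by
      refine (measure_mono hsub).trans ((measure_union_le _ _).trans ?_)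
      refine add_le_add (measure_biUnion_finset_le _ _) ?_
      rw [iter_inv (hinv i) hm]
      exact htail i N
    have hfin : ∑ a ∈ Finset.range N, m i (cylinder (A := A) (w ++ [a])) ≠ ∞ :=
      ENNReal.sum_ne_top.2 fun a _ => measure_ne_top _ _
    have h6 := ENNReal.toReal_mono (ENNReal.add_ne_top.2 ⟨hfin, ENNReal.ofReal_ne_top⟩) h5
    rwa [ENNReal.toReal_add hfin ENNReal.ofReal_ne_top, ENNReal.toReal_sum fun a _ => measure_ne_top _ _,
      ENNReal.toReal_ofReal (Real.rpow_nonneg (hT0 N) _)] at h6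
  exact absurd (ge_of_tendsto' h3 h4) (by norm_num)

/-- Following optimal extensions of a word produces an infinite path. -/
theorem exists_path (hstep : ∀ w : List ℕ, (cylinder (A := A) w).Nonempty →
      ∃ a, (cylinder (A := A) (w ++ [a])).Nonempty ∧ L w ≤ L (w ++ [a]))
    {w : List ℕ} (hw : (cylinder (A := A) w).Nonempty) :
    ∃ x : MarkovShift A, x ∈ cylinder w ∧ ∀ n, ∃ w' : List ℕ, (cylinder (A := A) w').Nonempty ∧
      cylinder (A := A) w' ⊆ cylOf x n ∧ L w ≤ L w' := by
  choose! nx hnx1 hnx2 using hstep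
  set W : ℕ → List ℕ := fun n => Nat.rec w (fun _ v => v ++ [nx v]) n with hWdef
  have hWs : ∀ n, W (n + 1) = W n ++ [nx (W n)] := fun n => rfl
  have hWne : ∀ n, (cylinder (A := A) (W n)).Nonempty := by
    intro n
    induction n with
    | zero => exact hw
    | succ n ih => rw [hWs]; exact hnx1 _ ih
  have hWL : ∀ n, L w ≤ L (W n) := by
    intro n
    induction n with
    | zero => exact le_rfl
    | succ n ih => rw [hWs]; exact ih.trans (hnx2 _ (hWne n))
  have hlen : ∀ n, (W n).length = w.length + n := by
    intro n
    induction n with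
    | zero => rfl
    | succ n ih => rw [hWs]; simp [ih]; omega
  choose y hy using hWne
  have hanti : ∀ n k, cylinder (A := A) (W (n + k)) ⊆ cylinder (W n) := by
    intro n k
    induction k with
    | zero => exact subset_rfl
    | succ k ih =>
      refine subset_trans ?_ ih
      rw [← add_assoc, hWs]
      exact fun z hz => (mem_cylinder_append.1 hz).1
  have hagree : ∀ n k i, i < w.length + n → (y (n + k)).1 i = (y n).1 i := by
    intro n k i hi
    have h1 := mem_cylinder.1 (hanti n k (hy (n + k))) i (by rw [hlen]; exact hi)
    have h2 := mem_cylinder.1 (hy n) i (by rw [hlen]; exact hi)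
    rw [h1, h2]
  have hxy : ∀ n i, i < w.length + n → (y (i + 1)).1 i = (y n).1 i := by
    intro n i hi
    rcases le_total n (i + 1) with hle | hle
    · obtain ⟨k, hk⟩ := Nat.exists_eq_add_of_le hle
      rw [hk]; exact hagree n k i hi
    · obtain ⟨k, hk⟩ := Nat.exists_eq_add_of_le hle
      rw [hk]; exact (hagree (i + 1) k i (by omega)).symm
  refine ⟨⟨fun i => (y (i + 1)).1 i, fun i => ?_⟩, ?_, fun n => ⟨W n, ⟨y n, hy n⟩, ?_, hWL n⟩⟩
  · show A ((y (i + 1)).1 i) ((y (i + 1 + 1)).1 (i + 1)) = true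
    have e := hxy (i + 2) i (by omega)
    have h2 := (y (i + 2)).2 i
    rw [← e] at h2
    exact h2
  · refine mem_cylinder.2 fun i hi => ?_
    have h1 := mem_cylinder.1 (hy 0) i hi
    exact (hxy 0 i (by omega)).trans h1
  · intro z hz i hi
    have h1 := mem_cylinder.1 hz i (by rw [hlen]; omega)
    have h2 := mem_cylinder.1 (hy n) i (by rw [hlen]; omega)
    exact (h1.trans h2.symm).trans (hxy n i (by omega)).symm

end abstractPart

/-- If `(1/β_i) log μ_{β_i}(C)` converges for every cylinder `C` (to `L(C)`), then the
function `Ĩ(x) = -lim_n lim_i (1/β_i) log μ_{β_i}([x₀ … x_n])` is well defined,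
nonnegative and lower semi-continuous; for every nonempty cylinder `C` the limit equals
`-inf_{x ∈ C} Ĩ(x)`; and `Ĩ ≥ Ĩ∘σ`, so that `Ĩ₀(x) = lim_n Ĩ(σⁿ x)` exists. -/
theorem deviation_function_along_subsequence
    (A : ℕ → ℕ → Bool)
    (hmix : TopologicallyMixing A)
    (hbip : FinitelyPrimitive A)
    (f : MarkovShift A → ℝ)
    (hWalters : SatisfiesWalters f)
    (hVar1 : Var1Finite f)
    (P : ℝ → ℝ)
    (hPfin : HasGurevichPressure f (P 1))
    (μmax : Measure (MarkovShift A))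
    (hmax : IsMaximizing f μmax)
    (huniq : ∀ ν', IsMaximizing f ν' → ν' = μmax)
    (h : ℝ → MarkovShift A → ℝ)
    (ν : ℝ → Measure (MarkovShift A))
    (hRPF : ∀ β : ℝ, 1 < β → IsRPF (fun x => β * f x) (P β) (h β) (ν β))
    (βs : ℕ → ℝ) (hβs : ∀ i, 1 < βs i) (hβtop : Tendsto βs atTop atTop)
    (L : List ℕ → ℝ)
    (hL : ∀ w : List ℕ, Tendsto
      (fun i => (1 / βs i) * Real.log (((gibbs (h (βs i)) (ν (βs i))) (cylinder w)).toReal))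
      atTop (𝓝 (L w))) :
    ∃ Itilde : MarkovShift A → EReal,
      (∀ x : MarkovShift A, Tendsto
          (fun n : ℕ => ((-(L (List.ofFn fun i : Fin (n + 1) => x.1 i)) : ℝ) : EReal))
          atTop (𝓝 (Itilde x))) ∧
        (∀ x, 0 ≤ Itilde x) ∧
        LowerSemicontinuous Itilde ∧
        (∀ w : List ℕ, (cylinder (A := A) w).Nonempty →
          ((L w : ℝ) : EReal) = - ⨅ x ∈ cylinder (A := A) w, Itilde x) ∧
        (∀ x : MarkovShift A, Itilde (shift x) ≤ Itilde x) ∧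
        (∀ x : MarkovShift A, ∃ l : EReal,
          Tendsto (fun n : ℕ => Itilde (shift^[n] x)) atTop (𝓝 l)) := by
  classical
  have hne : Nonempty (MarkovShift A) := by
    have := hmax.1.1
    exact nonempty_of_isProbabilityMeasure μmax
  obtain ⟨T, hT0, hT, hfacts⟩ := gibbs_facts hbip hWalters hVar1 hPfin hne
  have hF := fun i => hfacts (βs i) (P (βs i)) (h (βs i)) (ν (βs i)) (hβs i) (hRPF _ (hβs i))
  set m : ℕ → Measure (MarkovShift A) := fun i => gibbs (h (βs i)) (ν (βs i)) with hm
  have hprob : ∀ i, IsProbabilityMeasure (m i) := fun i => (hF i).1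
  have hinv : ∀ i, ∀ B : Set (MarkovShift A), MeasurableSet B → m i (shift ⁻¹' B) = m i B :=
    fun i => (hF i).2.1
  have hpos : ∀ i y n, 0 < m i (cylOf y n) := fun i => (hF i).2.2.1
  have htail : ∀ i N, m i {x | N ≤ x.1 0} ≤ ENNReal.ofReal (T N ^ βs i) := fun i => (hF i).2.2.2
  have hstep := fun (w : List ℕ) (hw : (cylinder (A := A) w).Nonempty) =>
    L_step hpos hprob hinv hT0 hT htail hβs hβtop hL hw
  have hsubL : ∀ w w' : List ℕ, (cylinder (A := A) w').Nonempty →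
      cylinder (A := A) w' ⊆ cylinder w → L w' ≤ L w := fun w w' hw' hsub =>
    L_mono hpos hprob hβs hL hw' fun i => measure_mono hsub
  have hwne : ∀ (x : MarkovShift A) n, (cylinder (A := A) (word x n)).Nonempty := fun x n =>
    ⟨x, by rw [cylinder_word]; exact mem_cylOf_self x n⟩
  have hLneg : ∀ w, L w ≤ 0 := by
    intro w
    refine le_of_tendsto' (hL w) fun i => ?_
    have := hprob i
    have hb := hβs i
    refine mul_nonpos_of_nonneg_of_nonpos (by positivity) ?_
    exact Real.log_nonpos ENNReal.toReal_nonneg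
      (ENNReal.toReal_le_of_le_ofReal zero_le_one (by simpa using prob_le_one))
  set I : ℕ → MarkovShift A → EReal := fun n x => ((-(L (word x (n + 1))) : ℝ) : EReal) with hI
  have hmono : ∀ x, Monotone fun n => I n x := by
    intro x n k hnk
    refine EReal.coe_le_coe_iff.2 (neg_le_neg (hsubL _ _ (hwne _ _) ?_))
    rw [cylinder_word, cylinder_word]
    exact fun z hz i hi => hz i (by omega)
  have hshift : ∀ x : MarkovShift A, (⨆ n, I n (shift x)) ≤ ⨆ n, I n x := by
    intro x
    refine iSup_le fun n => le_trans ?_ (le_iSup (fun n => I n x) (n + 1))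
    refine EReal.coe_le_coe_iff.2 (neg_le_neg (L_mono hpos hprob hβs hL (hwne _ _) fun i => ?_))
    rw [← hinv i (cylinder (word (shift x) (n + 1))) (isClopen_cylinder _).isOpen.measurableSet]
    apply measure_mono
    rw [cylinder_word, cylinder_word]
    intro z hz j hj
    exact hz (j + 1) (by omega)
  refine ⟨fun x => ⨆ n, I n x, fun x => tendsto_atTop_iSup (hmono x), fun x => ?_, ?_, ?_, hshift, ?_⟩
  · refine le_trans ?_ (le_iSup (fun n => I n x) 0)
    exact EReal.coe_nonneg.2 (neg_nonneg.2 (hLneg _))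
  · apply lowerSemicontinuous_iSup
    intro n
    apply Continuous.lowerSemicontinuous
    have : I n = (fun w : Fin (n + 1) → ℕ => ((-(L (List.ofFn w)) : ℝ) : EReal)) ∘ proj (n + 1) := rfl
    rw [this]
    exact continuous_of_discreteTopology.comp (continuous_proj _)
  · intro w hw
    have : ⨅ x ∈ cylinder (A := A) w, ⨆ n, I n x = ((-(L w) : ℝ) : EReal) := by
      apply le_antisymm
      · obtain ⟨x, hx, hxw⟩ := exists_path hstep hw
        refine iInf₂_le_of_le x hx (iSup_le fun n => ?_)
        obtain ⟨w', hne', hsub, hle⟩ := hxw (n + 1)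
        refine EReal.coe_le_coe_iff.2 (neg_le_neg (hle.trans (hsubL _ _ hne' ?_)))
        rw [cylinder_word]
        exact hsub
      · refine le_iInf₂ fun x hx => le_trans ?_ (le_iSup (fun n => I n x) w.length)
        refine EReal.coe_le_coe_iff.2 (neg_le_neg (hsubL _ _ (hwne _ _) ?_))
        rw [cylinder_word, cylinder_eq_cylOf hx]
        exact fun z hz i hi => hz i (by omega)
    rw [this, EReal.coe_neg, neg_neg]
  · intro x
    have hanti : Antitone fun n : ℕ => (⨆ k, I k (shift^[n] x)) := by
      apply antitone_nat_of_succ_le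
      intro n
      rw [Function.iterate_succ_apply']
      exact hshift _
    exact ⟨_, tendsto_atTop_iInf hanti⟩

end MarkovShift
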